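/- arXiv:1909.10269 — 3 statements merged into one kernel-verified Lean document; each statement's English description precedes it below -/
import Mathlib

section
/- The quantity max_{[0,1]} u_ε = u_ε(1) is uniformly bounded as ε ↓ 0 (i.e. limsup_{ε↓0} u_ε(1) < ∞), and for each fixed s ∈ [0,1) one has |u_ε(s) − θ₀| + ε |u_ε'(s)| → 0 as ε ↓ 0. Moreover, if lim_{ε↓0} β_ε(1)/α_ε(1) = μ₀ for some constant μ₀ > 0, then u_ε(1) → p₀ and ε u_ε'(1) → e(p₀) as ε ↓ 0, where p₀ > θ₀ is the unique root of e(p₀) = √(2 μ₀ (F(p₀) − F(θ₀))). -/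
open Filter Set MeasureTheory

noncomputable section

/-- `g` is locally `τ`-Hölder continuous on `S`. -/
def LocHolderOn (τ : ℝ) (g : ℝ → ℝ) (S : Set ℝ) : Prop :=
  ∀ K : Set ℝ, K ⊆ S → IsCompact K →
    ∃ C : ℝ, ∀ x ∈ K, ∀ y ∈ K, |g x - g y| ≤ C * |x - y| ^ τ

/-- Assumption (A1): `f ∈ C^{1,τ}_loc`, `inf f' > 0`, `f θ₀ = 0`. -/
def A1 (τ θ₀ : ℝ) (f : ℝ → ℝ) : Prop :=
  ContDiff ℝ 1 f ∧ LocHolderOn τ (deriv f) Set.univ ∧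
    (∃ c > 0, ∀ t : ℝ, c ≤ deriv f t) ∧ f θ₀ = 0

/-- Assumption (A2): `e ∈ C^{1,τ}_loc`, decreasing and strictly positive. -/
def A2 (τ : ℝ) (e : ℝ → ℝ) : Prop :=
  ContDiff ℝ 1 e ∧ LocHolderOn τ (deriv e) Set.univ ∧ Antitone e ∧ ∀ t : ℝ, 0 < e t

/-- Assumption (A3) for the coefficient pair `(a, b)`, with parameter `kstar ∈ (0,1)`. -/
def A3 (N : ℕ) (τ kstar : ℝ) (a b : ℝ → ℝ) : Prop :=
  ContDiff ℝ 2 a ∧ ContDiff ℝ 1 b ∧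
  LocHolderOn τ (deriv (deriv a)) (Set.Ici 0) ∧ LocHolderOn τ (deriv b) (Set.Ici 0) ∧
  (∃ M : ℝ, ∀ r : ℝ, 0 ≤ r → a r ≤ M ∧ b r ≤ M) ∧
  (∃ c > 0, ∀ r : ℝ, 0 ≤ r → c ≤ a r ∧ c ≤ b r) ∧
  MonotoneOn (fun r : ℝ => r ^ (N - 1) * b r) (Set.Ioi 0) ∧
  kstar ∈ Set.Ioo (0:ℝ) 1 ∧
  (∃ L > 0, Tendsto
    (fun R : ℝ => sSup ((fun r : ℝ =>
      R * (|deriv a r| + |deriv b r|) + R ^ 2 * |deriv (deriv a) r|) '' Set.Ico (kstar * R) R))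
    atTop (nhds L))

/-- `U`, with derivative `U'`, is a solution of
`(r^{N-1} a U')' = r^{N-1} b f(U)` on `(0,R)`, `r^{N-1} a U' → 0` as `r → 0⁺`,
`U'(R) = e(U(R))`, of class `C¹((0,R]) ∩ C^∞((0,R))`, continuous up to `[0,R]`. -/
def IsSol (N : ℕ) (f e a b : ℝ → ℝ) (R : ℝ) (U U' : ℝ → ℝ) : Prop :=
  ContinuousOn U (Set.Icc 0 R) ∧
  (∀ r ∈ Set.Ioc (0:ℝ) R, HasDerivWithinAt U (U' r) (Set.Icc 0 R) r) ∧
  ContinuousOn U' (Set.Ioc 0 R) ∧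
  ContDiffOn ℝ (⊤ : ℕ∞) U (Set.Ioo 0 R) ∧
  (∀ r ∈ Set.Ioo (0:ℝ) R,
    HasDerivAt (fun s : ℝ => s ^ (N - 1) * a s * U' s) (r ^ (N - 1) * b r * f (U r)) r) ∧
  Tendsto (fun r : ℝ => r ^ (N - 1) * a r * U' r) (nhdsWithin 0 (Set.Ioi 0)) (nhds 0) ∧
  U' R = e (U R)

/-- The primitive `F(t) = ∫₀ᵗ f(s) ds`. -/
def Fo (f : ℝ → ℝ) (t : ℝ) : ℝ := ∫ s in (0:ℝ)..t, f s

/-- `u`, with derivative `u'`, is a solution of the rescaled singularly perturbed problem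
`ε² (u'' + ((N−1)/s + α_ε'/α_ε) u') = (β_ε/α_ε) f(u)` on `(0,1)`, `u'(0) = 0`,
`ε u'(1) = e(u(1))`, where `α_ε(s) = a(s/ε)`, `β_ε(s) = b(s/ε)`; it also records
the facts `u ≥ θ₀` and `u' ≥ 0` on `[0,1]`. -/
def IsSolE (N : ℕ) (f e a b : ℝ → ℝ) (θ₀ ε : ℝ) (u u' : ℝ → ℝ) : Prop :=
  ContinuousOn u (Set.Icc 0 1) ∧
  (∀ s ∈ Set.Ioc (0:ℝ) 1, HasDerivWithinAt u (u' s) (Set.Icc 0 1) s) ∧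
  ContinuousOn u' (Set.Ioc 0 1) ∧
  ContDiffOn ℝ (⊤ : ℕ∞) u (Set.Ioo 0 1) ∧
  (∀ s ∈ Set.Ioo (0:ℝ) 1, ∃ d : ℝ, HasDerivAt u' d s ∧
    ε ^ 2 * (d + (((N:ℝ) - 1) / s + deriv (fun t : ℝ => a (t / ε)) s / a (s / ε)) * u' s)
      = b (s / ε) / a (s / ε) * f (u s)) ∧
  u' 0 = 0 ∧
  ε * u' 1 = e (u 1) ∧
  (∀ s ∈ Set.Icc (0:ℝ) 1, θ₀ ≤ u s ∧ 0 ≤ u' s)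

/-!
The flux form of the equation is `ε² (p u')' = q f(u)` with `p(s) = s^(N-1) α(s)` and
`q(s) = s^(N-1) β(s)`; dimension and coefficients enter only through `p` and `q`. Since `f(u) ≥ 0`
the flux `p u'` increases, so `ε u'` is bounded by a multiple of its boundary value
`e(u(1)) ≤ e(θ₀)`, and integrating the equation gives `f(u(s)) = O(ε)` for fixed `s < 1` and
`f(u(1 - ε)) = O(1)`. This yields the interior limits and the bound on `u(1)`.

Multiplying the equation by `p u'` gives `((ε p u')² / 2)' = p q (F(u))'`. Near `s = 1` the product
`p q` is almost the constant `p(1) q(1)`, whatever `ε` is, so that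
`(ε u'(1))² / 2 - (q / p)(1) (F(u(1)) - F(θ₀)) → 0`. Together with `ε u'(1) = e(u(1))` this says
that a strictly increasing function of `u(1)` tends to its value at `p₀`.
-/

open scoped Topology

theorem abs_sub_le_sub_of_abs_deriv_le {g h g' h' : ℝ → ℝ} {s t : ℝ} (hst : s ≤ t)
    (hg : ContinuousOn g (Icc s t)) (hh : ContinuousOn h (Icc s t))
    (hg' : ∀ x ∈ Ioo s t, HasDerivAt g (g' x) x) (hh' : ∀ x ∈ Ioo s t, HasDerivAt h (h' x) x)
    (hle : ∀ x ∈ Ioo s t, |g' x| ≤ h' x) : |g t - g s| ≤ h t - h s := by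
  have hsub : MonotoneOn (fun x => h x - g x) (Icc s t) :=
    monotoneOn_of_hasDerivWithinAt_nonneg (f' := fun x => h' x - g' x) (convex_Icc s t) (hh.sub hg)
      (by
        rw [interior_Icc]
        exact fun x hx => ((hh' x hx).sub (hg' x hx)).hasDerivWithinAt)
      (by
        rw [interior_Icc]
        exact fun x hx => sub_nonneg.2 ((le_abs_self _).trans (hle x hx)))
  have hadd : MonotoneOn (fun x => h x + g x) (Icc s t) :=
    monotoneOn_of_hasDerivWithinAt_nonneg (f' := fun x => h' x + g' x) (convex_Icc s t) (hh.add hg)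
      (by
        rw [interior_Icc]
        exact fun x hx => ((hh' x hx).add (hg' x hx)).hasDerivWithinAt)
      (by
        rw [interior_Icc]
        exact fun x hx => neg_le_iff_add_nonneg.1 (neg_le.1 (neg_le_of_abs_le (hle x hx))))
  have hs : s ∈ Icc s t := left_mem_Icc.2 hst
  have ht : t ∈ Icc s t := right_mem_Icc.2 hst
  rw [abs_le]
  constructor <;> linarith [hsub hs ht hst, hadd hs ht hst]

theorem abs_mul_sub_mul_le {x₁ x₂ y₁ y₂ M δ : ℝ} (hx₁ : x₁ ∈ Icc 0 M) (hy₂ : y₂ ∈ Icc 0 M)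
    (hx : |x₁ - x₂| ≤ δ) (hy : |y₁ - y₂| ≤ δ) : |x₁ * y₁ - x₂ * y₂| ≤ 2 * M * δ :=
  calc |x₁ * y₁ - x₂ * y₂| = |x₁ * (y₁ - y₂) + (x₁ - x₂) * y₂| := by ring_nf
    _ ≤ x₁ * |y₁ - y₂| + |x₁ - x₂| * y₂ := by
      refine (abs_add_le _ _).trans_eq ?_
      rw [abs_mul, abs_mul, abs_of_nonneg hx₁.1, abs_of_nonneg hy₂.1]
    _ ≤ M * δ + δ * M := add_le_add
      (mul_le_mul hx₁.2 hy (abs_nonneg _) (hx₁.1.trans hx₁.2))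
      (mul_le_mul hx hy₂.2 hy₂.1 ((abs_nonneg _).trans hx))
    _ = 2 * M * δ := by ring

theorem tendsto_of_strictMonoOn_of_tendsto_comp {ι α β : Type*} [LinearOrder α]
    [TopologicalSpace α] [OrderTopology α] [LinearOrder β] [TopologicalSpace β] [OrderTopology β]
    {l : Filter ι} {S : Set α} {Φ : α → β} {x : ι → α} {y : α} (hS : OrdConnected S)
    (hΦ : StrictMonoOn Φ S) (hy : y ∈ S) (hx : ∀ᶠ i in l, x i ∈ S)
    (hlim : Tendsto (fun i => Φ (x i)) l (𝓝 (Φ y))) : Tendsto x l (𝓝 y) := by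
  refine tendsto_order.2 ⟨fun a hay => ?_, fun a hya => ?_⟩
  · by_cases ha : a ∈ S
    · filter_upwards [hx, hlim.eventually_const_lt (hΦ ha hy hay)] with i hi hlt
      exact (hΦ.lt_iff_lt ha hi).1 hlt
    · filter_upwards [hx] with i hi
      exact lt_of_not_ge fun hle => ha (hS.out hi hy ⟨hle, hay.le⟩)
  · by_cases ha : a ∈ S
    · filter_upwards [hx, hlim.eventually_lt_const (hΦ hy ha hya)] with i hi hlt
      exact (hΦ.lt_iff_lt hi ha).1 hlt
    · filter_upwards [hx] with i hi
      exact lt_of_not_ge fun hle => ha (hS.out hy hi ⟨hya.le, hle⟩)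

theorem hasDerivAt_Fo {f : ℝ → ℝ} (hf : Continuous f) (t : ℝ) : HasDerivAt (Fo f) (f t) t :=
  (hf.integral_hasStrictDerivAt 0 t).hasDerivAt

theorem continuous_Fo {f : ℝ → ℝ} (hf : Continuous f) : Continuous (Fo f) :=
  continuous_iff_continuousAt.2 fun t => (hasDerivAt_Fo hf t).continuousAt

/-- The behaviour of the nonlinearity `f` above its zero `θ` on which the estimates rest:
`f` is nondecreasing and grows at least linearly there. -/
structure IsCoerciveFrom (f : ℝ → ℝ) (θ : ℝ) : Prop where
  monotoneOn : MonotoneOn f (Ici θ)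
  exists_linear_growth : ∃ c > 0, ∀ t ∈ Ici θ, c * (t - θ) ≤ f t

namespace IsCoerciveFrom

variable {f : ℝ → ℝ} {θ : ℝ}

theorem nonneg (hf : IsCoerciveFrom f θ) {t : ℝ} (ht : t ∈ Ici θ) : 0 ≤ f t := by
  obtain ⟨c, hc, hgrowth⟩ := hf.exists_linear_growth
  exact (mul_nonneg hc.le (sub_nonneg.2 ht)).trans (hgrowth t ht)

theorem pos (hf : IsCoerciveFrom f θ) {t : ℝ} (ht : θ < t) : 0 < f t := by
  obtain ⟨c, hc, hgrowth⟩ := hf.exists_linear_growth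
  exact (mul_pos hc (sub_pos.2 ht)).trans_le (hgrowth t ht.le)

theorem strictMonoOn_Fo (hf : IsCoerciveFrom f θ) (hfc : Continuous f) :
    StrictMonoOn (Fo f) (Ici θ) := by
  refine strictMonoOn_of_hasDerivWithinAt_pos (f' := f) (convex_Ici θ)
    (continuous_Fo hfc).continuousOn (fun t _ => (hasDerivAt_Fo hfc t).hasDerivWithinAt) ?_
  rw [interior_Ici]
  exact fun t ht => hf.pos ht

theorem Fo_sub_nonneg (hf : IsCoerciveFrom f θ) (hfc : Continuous f) {t : ℝ} (ht : t ∈ Ici θ) :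
    0 ≤ Fo f t - Fo f θ :=
  sub_nonneg.2 ((hf.strictMonoOn_Fo hfc).monotoneOn self_mem_Ici ht ht)

end IsCoerciveFrom

/-- `u`, with derivative `u'`, is a nondecreasing solution of `ε² (p u')' = q f(u)` on `(l, r)`
with values above `θ`. Neither `u'` nor the flux `p u'` need be continuous at `l`, where `p` may
degenerate. -/
structure IsMonotoneSol (f p q : ℝ → ℝ) (θ ε l r : ℝ) (u u' : ℝ → ℝ) : Prop where
  continuousOn : ContinuousOn u (Icc l r)
  continuousOn_flux : ContinuousOn (fun s => p s * u' s) (Ioc l r)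
  hasDerivAt : ∀ s ∈ Ioo l r, HasDerivAt u (u' s) s
  hasDerivAt_flux : ∀ s ∈ Ioo l r, HasDerivAt (fun s => p s * u' s) (q s * f (u s) / ε ^ 2) s
  apply_mem : ∀ s ∈ Icc l r, u s ∈ Ici θ
  deriv_nonneg : ∀ s ∈ Icc l r, 0 ≤ u' s

namespace IsMonotoneSol

variable {f p q u u' : ℝ → ℝ} {θ ε l r s t m M : ℝ}

theorem monotoneOn (h : IsMonotoneSol f p q θ ε l r u u') : MonotoneOn u (Icc l r) := by
  refine monotoneOn_of_hasDerivWithinAt_nonneg (f' := u') (convex_Icc l r) h.continuousOn ?_ ?_ <;>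
    rw [interior_Icc]
  exacts [fun s hs => (h.hasDerivAt s hs).hasDerivWithinAt,
    fun s hs => h.deriv_nonneg s (Ioo_subset_Icc_self hs)]

theorem exists_deriv_mul_eq_sub (h : IsMonotoneSol f p q θ ε l r u u') (hs : l < s) (hst : s < t)
    (ht : t ≤ r) : ∃ x ∈ Ioo s t, u' x * (t - s) = u t - u s := by
  obtain ⟨x, hx, hslope⟩ := exists_hasDerivAt_eq_slope u u' hst
    (h.continuousOn.mono (Icc_subset_Icc hs.le ht))
    (fun y hy => h.hasDerivAt y ⟨hs.trans hy.1, hy.2.trans_le ht⟩)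
  exact ⟨x, hx, (eq_div_iff (sub_pos.2 hst).ne').1 hslope⟩

theorem flux_le_flux (h : IsMonotoneSol f p q θ ε l r u u') (hf : ∀ x ∈ Ici θ, 0 ≤ f x)
    (hs : l < s) (hst : s ≤ t) (ht : t ≤ r) (hq : MapsTo q (Icc s t) (Ici 0)) :
    p s * u' s ≤ p t * u' t := by
  have hmono : MonotoneOn (fun x => p x * u' x) (Icc s t) := by
    refine monotoneOn_of_hasDerivWithinAt_nonneg (f' := fun x => q x * f (u x) / ε ^ 2)
      (convex_Icc s t) (h.continuousOn_flux.mono fun x hx => ⟨hs.trans_le hx.1, hx.2.trans ht⟩)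
      ?_ ?_ <;> rw [interior_Icc] <;> intro x hx
    · exact (h.hasDerivAt_flux x ⟨hs.trans hx.1, hx.2.trans_le ht⟩).hasDerivWithinAt
    · have hfx : 0 ≤ f (u x) :=
        hf _ (h.apply_mem x ⟨(hs.trans hx.1).le, (hx.2.trans_le ht).le⟩)
      have hqx : 0 ≤ q x := hq (Ioo_subset_Icc_self hx)
      positivity
  exact hmono (left_mem_Icc.2 hst) (right_mem_Icc.2 hst) hst

theorem mul_deriv_le_mul_deriv (h : IsMonotoneSol f p q θ ε l r u u')
    (hf : ∀ x ∈ Ici θ, 0 ≤ f x) (hs : l < s) (hst : s ≤ t) (ht : t ≤ r)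
    (hp : MapsTo p (Icc s t) (Icc m M)) (hq : MapsTo q (Icc s t) (Ici 0)) :
    m * u' s ≤ M * u' t :=
  calc m * u' s ≤ p s * u' s := mul_le_mul_of_nonneg_right (hp (left_mem_Icc.2 hst)).1
        (h.deriv_nonneg s ⟨hs.le, hst.trans ht⟩)
    _ ≤ p t * u' t := h.flux_le_flux hf hs hst ht hq
    _ ≤ M * u' t := mul_le_mul_of_nonneg_right (hp (right_mem_Icc.2 hst)).2
        (h.deriv_nonneg t ⟨hs.le.trans hst, ht⟩)

theorem mul_deriv_mul_sub_le (h : IsMonotoneSol f p q θ ε l r u u') (hf : ∀ x ∈ Ici θ, 0 ≤ f x)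
    (hs : l < s) (hst : s < t) (ht : t ≤ r) (hp : MapsTo p (Icc s t) (Icc m M))
    (hq : MapsTo q (Icc s t) (Ici 0)) : m * u' s * (t - s) ≤ M * (u t - u s) := by
  obtain ⟨x, hx, hxe⟩ := h.exists_deriv_mul_eq_sub hs hst ht
  have hsub : Icc s x ⊆ Icc s t := Icc_subset_Icc_right hx.2.le
  rw [← hxe, ← mul_assoc]
  exact mul_le_mul_of_nonneg_right (h.mul_deriv_le_mul_deriv hf hs hx.1.le (hx.2.le.trans ht)
    (hp.mono_left hsub) (hq.mono_left hsub)) (sub_pos.2 hst).le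

theorem mul_sub_le_mul_deriv (h : IsMonotoneSol f p q θ ε l r u u') (hf : ∀ x ∈ Ici θ, 0 ≤ f x)
    (hs : l < s) (hst : s < t) (ht : t ≤ r) (hp : MapsTo p (Icc s t) (Icc m M))
    (hq : MapsTo q (Icc s t) (Ici 0)) : m * (u t - u s) ≤ M * u' t * (t - s) := by
  obtain ⟨x, hx, hxe⟩ := h.exists_deriv_mul_eq_sub hs hst ht
  have hsub : Icc x t ⊆ Icc s t := Icc_subset_Icc_left hx.1.le
  rw [← hxe, ← mul_assoc]
  exact mul_le_mul_of_nonneg_right (h.mul_deriv_le_mul_deriv hf (hs.trans hx.1) hx.2.le ht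
    (hp.mono_left hsub) (hq.mono_left hsub)) (sub_pos.2 hst).le

theorem mul_f_mul_sub_le (h : IsMonotoneSol f p q θ ε l r u u') (hf : IsCoerciveFrom f θ)
    (hε : ε ≠ 0) (hm : 0 ≤ m) (hs : l < s) (hst : s < t) (ht : t ≤ r)
    (hp : MapsTo p (Icc s t) (Icc m M)) (hq : MapsTo q (Icc s t) (Ici m)) :
    m * f (u s) * (t - s) ≤ ε ^ 2 * (M * u' t) := by
  obtain ⟨x, hx, hslope⟩ := exists_hasDerivAt_eq_slope (fun x => p x * u' x)
    (fun x => q x * f (u x) / ε ^ 2) hst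
    (h.continuousOn_flux.mono fun x hx => ⟨hs.trans_le hx.1, hx.2.trans ht⟩)
    (fun x hx => h.hasDerivAt_flux x ⟨hs.trans hx.1, hx.2.trans_le ht⟩)
  have hs_mem : s ∈ Icc l r := ⟨hs.le, hst.le.trans ht⟩
  have hx_mem : x ∈ Icc l r := ⟨(hs.trans hx.1).le, hx.2.le.trans ht⟩
  have ht_mem : t ∈ Icc l r := ⟨(hs.trans hst).le, ht⟩
  have hfs : 0 ≤ f (u s) := hf.nonneg (h.apply_mem s hs_mem)
  have hfsx : f (u s) ≤ f (u x) := hf.monotoneOn (h.apply_mem s hs_mem) (h.apply_mem x hx_mem)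
    (h.monotoneOn hs_mem hx_mem hx.1.le)
  have hqx : m ≤ q x := hq (Ioo_subset_Icc_self hx)
  have hts : 0 < t - s := sub_pos.2 hst
  have hflux_s : 0 ≤ p s * u' s :=
    mul_nonneg (hm.trans (hp (left_mem_Icc.2 hst.le)).1) (h.deriv_nonneg s hs_mem)
  have hflux_t : p t * u' t ≤ M * u' t :=
    mul_le_mul_of_nonneg_right (hp (right_mem_Icc.2 hst.le)).2 (h.deriv_nonneg t ht_mem)
  calc m * f (u s) * (t - s) ≤ q x * f (u x) * (t - s) := 
        mul_le_mul_of_nonneg_right (mul_le_mul hqx hfsx hfs (hm.trans hqx)) hts.le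
    _ = ε ^ 2 * (p t * u' t - p s * u' s) := by
      rw [eq_div_iff hts.ne'] at hslope
      rw [← hslope]
      field_simp
    _ ≤ ε ^ 2 * (M * u' t) := by gcongr; linarith

/-- The boundary layer has width `ε`: at distance `ε` from `r` the nonlinearity is already bounded,
and on the layer itself `u'` is at most of order `1 / ε`. -/
theorem mul_apply_right_sub_le (h : IsMonotoneSol f p q θ ε l r u u') (hf : IsCoerciveFrom f θ)
    {c : ℝ} (hc : 0 ≤ c) (hgrowth : ∀ x ∈ Ici θ, c * (x - θ) ≤ f x) (hε : 0 < ε) (hm : 0 ≤ m)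
    (hl : l < r - ε) (hp : MapsTo p (Icc (r - ε) r) (Icc m M))
    (hq : MapsTo q (Icc (r - ε) r) (Ici m)) :
    m * c * (u r - θ) ≤ M * (1 + c) * (ε * u' r) := by
  have hlt : r - ε < r := sub_lt_self r hε
  have hlayer : m * (u r - u (r - ε)) ≤ M * (ε * u' r) := by
    have := h.mul_sub_le_mul_deriv (fun x => hf.nonneg) hl hlt le_rfl hp
      (hq.mono_right (Ici_subset_Ici.2 hm))
    linarith
  have hinner : m * f (u (r - ε)) ≤ M * (ε * u' r) := by
    have := h.mul_f_mul_sub_le hf hε.ne' hm hl hlt le_rfl hp hq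
    rw [sub_sub_cancel] at this
    exact le_of_mul_le_mul_right (this.trans_eq (by ring)) hε
  calc m * c * (u r - θ) = c * (m * (u r - u (r - ε))) + m * (c * (u (r - ε) - θ)) := by ring
    _ ≤ c * (M * (ε * u' r)) + m * f (u (r - ε)) := by
      gcongr
      exact hgrowth _ (h.apply_mem _ ⟨hl.le, hlt.le⟩)
    _ ≤ M * (1 + c) * (ε * u' r) := by linarith

theorem hasDerivAt_energy (h : IsMonotoneSol f p q θ ε l r u u') (hfc : Continuous f) (hε : ε ≠ 0)
    (κ : ℝ) (hs : s ∈ Ioo l r) :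
    HasDerivAt (fun x => (ε * (p x * u' x)) ^ 2 / 2 - κ * Fo f (u x))
      ((p s * q s - κ) * (f (u s) * u' s)) s := by
  have hF := (hasDerivAt_Fo hfc (u s)).comp s (h.hasDerivAt s hs)
  refine (((((h.hasDerivAt_flux s hs).const_mul ε).pow 2).div_const 2).sub
    (hF.const_mul κ)).congr_deriv ?_
  field_simp
  ring

theorem abs_energy_sub_le (h : IsMonotoneSol f p q θ ε l r u u') (hf : IsCoerciveFrom f θ)
    (hfc : Continuous f) (hε : ε ≠ 0) (hs : l < s) (hst : s ≤ t) (ht : t ≤ r) {κ ω : ℝ}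
    (hω : ∀ x ∈ Ioo s t, |p x * q x - κ| ≤ ω) :
    |((ε * (p t * u' t)) ^ 2 / 2 - κ * Fo f (u t))
      - ((ε * (p s * u' s)) ^ 2 / 2 - κ * Fo f (u s))| ≤ ω * (Fo f (u t) - Fo f (u s)) := by
  have hmem : ∀ x ∈ Ioo s t, x ∈ Ioo l r := fun x hx => ⟨hs.trans hx.1, hx.2.trans_le ht⟩
  have hFu : ContinuousOn (fun x => Fo f (u x)) (Icc s t) :=
    (continuous_Fo hfc).comp_continuousOn (h.continuousOn.mono (Icc_subset_Icc hs.le ht))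
  have hflux : ContinuousOn (fun x => p x * u' x) (Icc s t) :=
    h.continuousOn_flux.mono fun x hx => ⟨hs.trans_le hx.1, hx.2.trans ht⟩
  rw [mul_sub]
  refine abs_sub_le_sub_of_abs_deriv_le
    (g := fun x => (ε * (p x * u' x)) ^ 2 / 2 - κ * Fo f (u x)) (h := fun x => ω * Fo f (u x))
    hst (by fun_prop) (by fun_prop)
    (fun x hx => h.hasDerivAt_energy hfc hε κ (hmem x hx))
    (fun x hx =>
      ((hasDerivAt_Fo hfc (u x)).comp x (h.hasDerivAt x (hmem x hx))).const_mul ω) ?_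
  intro x hx
  have hx_mem : x ∈ Icc l r := Ioo_subset_Icc_self (hmem x hx)
  have hfu : 0 ≤ f (u x) * u' x :=
    mul_nonneg (hf.nonneg (h.apply_mem x hx_mem)) (h.deriv_nonneg x hx_mem)
  rw [abs_mul, abs_of_nonneg hfu]
  exact mul_le_mul_of_nonneg_right (hω x hx) hfu

theorem abs_energy_right_le (h : IsMonotoneSol f p q θ ε l r u u') (hf : IsCoerciveFrom f θ)
    (hfc : Continuous f) (hε : 0 < ε) (hm : 0 ≤ m) (hs : l < s) (hsr : s ≤ r)
    (hp : MapsTo p (Icc s r) (Icc m M)) (hq : MapsTo q (Icc s r) (Icc m M)) {ω : ℝ} (hω₀ : 0 ≤ ω)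
    (hω : ∀ x ∈ Ioo s r, |p x * q x - p r * q r| ≤ ω) :
    |(ε * (p r * u' r)) ^ 2 / 2 - p r * q r * (Fo f (u r) - Fo f θ)|
      ≤ ω * (Fo f (u r) - Fo f θ)
        + M ^ 2 * ((ε * u' s) ^ 2 / 2 + (Fo f (u s) - Fo f θ)) := by
  have hs_mem : s ∈ Icc l r := ⟨hs.le, hsr⟩
  have hFs : 0 ≤ Fo f (u s) - Fo f θ := hf.Fo_sub_nonneg hfc (h.apply_mem s hs_mem)
  have hincr := h.abs_energy_sub_le hf hfc hε.ne' hs hsr le_rfl hω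
  have hleft : |(ε * (p s * u' s)) ^ 2 / 2 - p r * q r * (Fo f (u s) - Fo f θ)|
      ≤ M ^ 2 * ((ε * u' s) ^ 2 / 2 + (Fo f (u s) - Fo f θ)) := by
    have hps := hp (left_mem_Icc.2 hsr)
    have hpr := hp (right_mem_Icc.2 hsr)
    have hqr := hq (right_mem_Icc.2 hsr)
    have hkin : (ε * (p s * u' s)) ^ 2 / 2 ≤ M ^ 2 * ((ε * u' s) ^ 2 / 2) := by
      have hsq : p s ^ 2 ≤ M ^ 2 := pow_le_pow_left₀ (hm.trans hps.1) hps.2 2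
      calc (ε * (p s * u' s)) ^ 2 / 2 = p s ^ 2 * ((ε * u' s) ^ 2 / 2) := by ring
        _ ≤ M ^ 2 * ((ε * u' s) ^ 2 / 2) := by gcongr
    have hpot : p r * q r * (Fo f (u s) - Fo f θ) ≤ M ^ 2 * (Fo f (u s) - Fo f θ) := by
      rw [sq]
      gcongr
      exacts [hm.trans hqr.1, (hm.trans hpr.1).trans hpr.2, hpr.2, hqr.2]
    have hpot₀ : 0 ≤ p r * q r * (Fo f (u s) - Fo f θ) :=
      mul_nonneg (mul_nonneg (hm.trans hpr.1) (hm.trans hqr.1)) hFs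
    have hkin₀ : 0 ≤ (ε * (p s * u' s)) ^ 2 / 2 := by positivity
    rw [abs_le]
    constructor <;> linarith
  have hωF : ω * (Fo f (u r) - Fo f (u s)) ≤ ω * (Fo f (u r) - Fo f θ) := by gcongr; linarith
  rw [abs_le] at hincr hleft ⊢
  constructor <;> linarith

end IsMonotoneSol

/-- The coefficients `p ε`, `q ε` lie between positive constants on each `[l, 1]`, `l > 0`,
uniformly for small `ε`; the constants may degenerate as `l → 0`. -/
def LocallyUniformlyElliptic (p q : ℝ → ℝ → ℝ) : Prop :=
  ∀ l ∈ Ioo (0 : ℝ) 1, ∃ m > 0, ∃ M, ∀ᶠ ε in 𝓝[>] 0,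
    MapsTo (p ε) (Icc l 1) (Icc m M) ∧ MapsTo (q ε) (Icc l 1) (Icc m M)

/-- The functions `g ε` are left-equicontinuous at `1` in the limit `ε ↓ 0`. -/
def AsymptEquicontinuousAtOne (g : ℝ → ℝ → ℝ) : Prop :=
  ∀ ω > 0, ∃ l ∈ Ioo (0 : ℝ) 1, ∀ᶠ ε in 𝓝[>] 0, ∀ s ∈ Ioo l 1, |g ε s - g ε 1| ≤ ω

section Family

variable {f e : ℝ → ℝ} {p q u u' : ℝ → ℝ → ℝ} {θ η B μ : ℝ}

theorem eventually_apply_one_le (hf : IsCoerciveFrom f θ) (hpq : LocallyUniformlyElliptic p q)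
    (hu : ∀ ε > 0, IsMonotoneSol f (p ε) (q ε) θ ε 0 1 (u ε) (u' ε))
    (hη : ∀ ε > 0, ε * u' ε 1 ≤ η) : ∃ B, ∀ᶠ ε in 𝓝[>] 0, u ε 1 ≤ B := by
  obtain ⟨c, hc, hgrowth⟩ := hf.exists_linear_growth
  obtain ⟨m, hm, M, hmM⟩ := hpq (1 / 2) (by norm_num)
  refine ⟨θ + M * (1 + c) * η / (m * c), ?_⟩
  filter_upwards [hmM, Ioo_mem_nhdsGT (show (0 : ℝ) < 1 / 2 by norm_num)] with ε ⟨hp, hq⟩ hε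
  have hsub : Icc (1 - ε) 1 ⊆ Icc (1 / 2) 1 := Icc_subset_Icc_left (by linarith [hε.2])
  have hM : 0 ≤ M := hm.le.trans ((hp (right_mem_Icc.2 (by norm_num))).1.trans
    (hp (right_mem_Icc.2 (by norm_num))).2)
  rw [← sub_le_iff_le_add', le_div_iff₀' (mul_pos hm hc)]
  calc m * c * (u ε 1 - θ) ≤ M * (1 + c) * (ε * u' ε 1) :=
        (hu ε hε.1).mul_apply_right_sub_le hf hc.le hgrowth hε.1 hm.le (by linarith [hε.2])
          (hp.mono_left hsub) ((hq.mono_left hsub).mono_right Icc_subset_Ici_self)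
    _ ≤ M * (1 + c) * η := by gcongr; exact hη ε hε.1

theorem tendsto_apply_interior (hf : IsCoerciveFrom f θ) (hpq : LocallyUniformlyElliptic p q)
    (hu : ∀ ε > 0, IsMonotoneSol f (p ε) (q ε) θ ε 0 1 (u ε) (u' ε))
    (hη : ∀ ε > 0, ε * u' ε 1 ≤ η) {s : ℝ} (hs : s ∈ Ioo 0 1) :
    Tendsto (fun ε => u ε s) (𝓝[>] 0) (𝓝 θ) := by
  obtain ⟨c, hc, hgrowth⟩ := hf.exists_linear_growth
  obtain ⟨m, hm, M, hmM⟩ := hpq s hs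
  have h1s : 0 < 1 - s := sub_pos.2 hs.2
  have hlim : Tendsto (fun ε => θ + ε * (M * η) / (m * c * (1 - s))) (𝓝[>] 0) (𝓝 θ) :=
    tendsto_nhdsWithin_of_tendsto_nhds (Continuous.tendsto' (by fun_prop) _ _ (by simp))
  refine tendsto_of_tendsto_of_tendsto_of_le_of_le' tendsto_const_nhds hlim ?_ ?_
  · filter_upwards [self_mem_nhdsWithin] with ε hε
    exact (hu ε hε).apply_mem s (Ioo_subset_Icc_self hs)
  · filter_upwards [hmM, self_mem_nhdsWithin] with ε ⟨hp, hq⟩ (hε : 0 < ε)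
    have hus : u ε s ∈ Ici θ := (hu ε hε).apply_mem s (Ioo_subset_Icc_self hs)
    have hM : 0 ≤ M := hm.le.trans ((hp (left_mem_Icc.2 hs.2.le)).1.trans
      (hp (left_mem_Icc.2 hs.2.le)).2)
    rw [← sub_le_iff_le_add', le_div_iff₀' (by positivity)]
    calc m * c * (1 - s) * (u ε s - θ) = m * (c * (u ε s - θ)) * (1 - s) := by ring
      _ ≤ m * f (u ε s) * (1 - s) := by gcongr; exact hgrowth _ hus
      _ ≤ ε ^ 2 * (M * u' ε 1) := (hu ε hε).mul_f_mul_sub_le hf hε.ne' hm.le hs.1 hs.2 le_rfl hp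
          (hq.mono_right Icc_subset_Ici_self)
      _ = ε * (M * (ε * u' ε 1)) := by ring
      _ ≤ ε * (M * η) := by gcongr; exact hη ε hε

theorem tendsto_mul_deriv_interior (hf : IsCoerciveFrom f θ) (hpq : LocallyUniformlyElliptic p q)
    (hu : ∀ ε > 0, IsMonotoneSol f (p ε) (q ε) θ ε 0 1 (u ε) (u' ε))
    (hη : ∀ ε > 0, ε * u' ε 1 ≤ η) {s : ℝ} (hs : s ∈ Ioo 0 1) :
    Tendsto (fun ε => ε * u' ε s) (𝓝[>] 0) (𝓝 0) := by
  obtain ⟨m, hm, M, hmM⟩ := hpq s hs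
  obtain ⟨t, hst, ht⟩ := exists_between hs.2
  have hts : 0 < t - s := sub_pos.2 hst
  have hlim : Tendsto (fun ε => ε * (M * (u ε t - u ε s) / (m * (t - s)))) (𝓝[>] 0) (𝓝 0) := by
    have hdiff := (tendsto_apply_interior hf hpq hu hη ⟨hs.1.trans hst, ht⟩).sub
      (tendsto_apply_interior hf hpq hu hη hs)
    simpa using (tendsto_id'.2 nhdsWithin_le_nhds).mul ((hdiff.const_mul M).div_const (m * (t - s)))
  refine tendsto_of_tendsto_of_tendsto_of_le_of_le' tendsto_const_nhds hlim ?_ ?_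
  · filter_upwards [self_mem_nhdsWithin] with ε (hε : 0 < ε)
    exact mul_nonneg hε.le ((hu ε hε).deriv_nonneg s (Ioo_subset_Icc_self hs))
  · filter_upwards [hmM, self_mem_nhdsWithin] with ε ⟨hp, hq⟩ (hε : 0 < ε)
    have hsub : Icc s t ⊆ Icc s 1 := Icc_subset_Icc_right ht.le
    have hbound := (hu ε hε).mul_deriv_mul_sub_le (fun x => hf.nonneg) hs.1 hst ht.le
      (hp.mono_left hsub)
      ((hq.mono_left hsub).mono_right (Icc_subset_Ici_self.trans (Ici_subset_Ici.2 hm.le)))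
    gcongr
    rw [le_div_iff₀' (mul_pos hm hts)]
    linarith

theorem tendsto_interior (hf : IsCoerciveFrom f θ) (hpq : LocallyUniformlyElliptic p q)
    (hu : ∀ ε > 0, IsMonotoneSol f (p ε) (q ε) θ ε 0 1 (u ε) (u' ε))
    (hη : ∀ ε > 0, ε * u' ε 1 ≤ η) (hu₀ : ∀ ε > 0, u' ε 0 = 0) {s : ℝ} (hs : s ∈ Ico 0 1) :
    Tendsto (fun ε => |u ε s - θ| + ε * |u' ε s|) (𝓝[>] 0) (𝓝 0) := by
  have habs : ∀ t ∈ Ioo (0 : ℝ) 1, Tendsto (fun ε => |u ε t - θ|) (𝓝[>] 0) (𝓝 0) := fun t ht => by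
    simpa using ((tendsto_apply_interior hf hpq hu hη ht).sub_const θ).abs
  obtain rfl | hs₀ := hs.1.eq_or_lt
  · have hhalf : (1 / 2 : ℝ) ∈ Ioo 0 1 := by norm_num
    refine tendsto_of_tendsto_of_tendsto_of_le_of_le' tendsto_const_nhds (habs _ hhalf) ?_ ?_ <;>
      filter_upwards [self_mem_nhdsWithin] with ε (hε : 0 < ε)
    · positivity
    · have hzero : (0 : ℝ) ∈ Icc 0 1 := Ico_subset_Icc_self hs
      have hle := (hu ε hε).monotoneOn hzero (Ioo_subset_Icc_self hhalf) hhalf.1.le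
      rw [hu₀ ε hε, abs_zero, mul_zero, add_zero]
      exact abs_le_abs_of_nonneg (sub_nonneg.2 ((hu ε hε).apply_mem 0 hzero))
        (sub_le_sub_right hle θ)
  · have hsum := (habs s ⟨hs₀, hs.2⟩).add (tendsto_mul_deriv_interior hf hpq hu hη ⟨hs₀, hs.2⟩)
    rw [add_zero] at hsum
    refine hsum.congr' ?_
    filter_upwards [self_mem_nhdsWithin] with ε hε
    rw [abs_of_nonneg ((hu ε hε).deriv_nonneg s (Ico_subset_Icc_self hs))]

theorem tendsto_flux_energy_one (hf : IsCoerciveFrom f θ) (hfc : Continuous f)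
    (hpq : LocallyUniformlyElliptic p q)
    (hosc : AsymptEquicontinuousAtOne fun ε s => p ε s * q ε s)
    (hu : ∀ ε > 0, IsMonotoneSol f (p ε) (q ε) θ ε 0 1 (u ε) (u' ε))
    (hη : ∀ ε > 0, ε * u' ε 1 ≤ η) (hB : ∀ᶠ ε in 𝓝[>] 0, u ε 1 ≤ B) :
    Tendsto (fun ε => (ε * (p ε 1 * u' ε 1)) ^ 2 / 2
      - p ε 1 * q ε 1 * (Fo f (u ε 1) - Fo f θ)) (𝓝[>] 0) (𝓝 0) := by
  set W : ℝ := |Fo f B - Fo f θ|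
  have hW₀ : 0 < W + 1 := by positivity
  refine (Asymptotics.isLittleO_const_iff hW₀.ne').1 (Asymptotics.isLittleO_iff.2 fun ω hω => ?_)
  obtain ⟨s, hs, hωs⟩ := hosc ω hω
  obtain ⟨m, hm, M, hmM⟩ := hpq s hs
  have hresidual : Tendsto (fun ε => M ^ 2 * ((ε * u' ε s) ^ 2 / 2 + (Fo f (u ε s) - Fo f θ)))
      (𝓝[>] 0) (𝓝 0) := by
    have hkin := ((tendsto_mul_deriv_interior hf hpq hu hη hs).pow 2).div_const 2
    have hpot := (((continuous_Fo hfc).tendsto θ).comp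
      (tendsto_apply_interior hf hpq hu hη hs)).sub_const (Fo f θ)
    simpa using (hkin.add hpot).const_mul (M ^ 2)
  filter_upwards [hωs, hmM, hB, hresidual.eventually_lt_const hω, self_mem_nhdsWithin]
    with ε hωε ⟨hp, hq⟩ hBε hres hε
  have hu1 : u ε 1 ∈ Ici θ := (hu ε hε).apply_mem 1 (right_mem_Icc.2 zero_le_one)
  have hFW : Fo f (u ε 1) - Fo f θ ≤ W := (sub_le_sub_right
    ((hf.strictMonoOn_Fo hfc).monotoneOn hu1 (hu1.trans hBε) hBε) _).trans (le_abs_self _)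
  rw [Real.norm_eq_abs, Real.norm_of_nonneg hW₀.le]
  calc _ ≤ ω * (Fo f (u ε 1) - Fo f θ) + M ^ 2 * ((ε * u' ε s) ^ 2 / 2 + (Fo f (u ε s) - Fo f θ)) :=
        (hu ε hε).abs_energy_right_le hf hfc hε hm.le hs.1 hs.2.le hp hq hω.le hωε
    _ ≤ ω * W + ω := by gcongr
    _ = ω * (W + 1) := by ring

theorem tendsto_energy_one (hf : IsCoerciveFrom f θ) (hfc : Continuous f)
    (hpq : LocallyUniformlyElliptic p q)
    (hosc : AsymptEquicontinuousAtOne fun ε s => p ε s * q ε s)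
    (hu : ∀ ε > 0, IsMonotoneSol f (p ε) (q ε) θ ε 0 1 (u ε) (u' ε))
    (hη : ∀ ε > 0, ε * u' ε 1 ≤ η) (hB : ∀ᶠ ε in 𝓝[>] 0, u ε 1 ≤ B) :
    Tendsto (fun ε => (ε * u' ε 1) ^ 2 / 2 - q ε 1 / p ε 1 * (Fo f (u ε 1) - Fo f θ))
      (𝓝[>] 0) (𝓝 0) := by
  obtain ⟨m, hm, M, hmM⟩ := hpq (1 / 2) (by norm_num)
  have hp1 : ∀ᶠ ε in 𝓝[>] 0, m ≤ p ε 1 :=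
    hmM.mono fun ε h => (h.1 (right_mem_Icc.2 (by norm_num))).1
  refine ((tendsto_flux_energy_one hf hfc hpq hosc hu hη hB).zero_mul_isBoundedUnder_le
    (g := fun ε => (p ε 1 ^ 2)⁻¹) (isBoundedUnder_of_eventually_le (a := (m ^ 2)⁻¹) ?_)).congr' ?_
  · filter_upwards [hp1] with ε hpε
    rw [Function.comp_apply, Real.norm_of_nonneg (by positivity)]
    gcongr
  · filter_upwards [hp1] with ε hpε
    have : p ε 1 ≠ 0 := (hm.trans_le hpε).ne'
    field_simp

/-- The function `Φ(x) = μ (F(x) - F(θ)) - e(x)² / 2`, whose only zero above `θ` is the limit of the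
boundary values. -/
def boundaryEnergyGap (f e : ℝ → ℝ) (θ μ x : ℝ) : ℝ :=
  μ * (Fo f x - Fo f θ) - e x ^ 2 / 2

theorem strictMonoOn_boundaryEnergyGap (hf : IsCoerciveFrom f θ) (hfc : Continuous f)
    (he_anti : AntitoneOn e (Ici θ)) (he_nonneg : ∀ x ∈ Ici θ, 0 ≤ e x) (hμ : 0 < μ) :
    StrictMonoOn (boundaryEnergyGap f e θ μ) (Ici θ) := by
  intro x hx y hy hxy
  have hF : μ * (Fo f x - Fo f θ) < μ * (Fo f y - Fo f θ) :=
    mul_lt_mul_of_pos_left (sub_lt_sub_right (hf.strictMonoOn_Fo hfc hx hy hxy) _) hμ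
  have hsq : e y ^ 2 ≤ e x ^ 2 := pow_le_pow_left₀ (he_nonneg y hy) (he_anti hx hy hxy.le) 2
  unfold boundaryEnergyGap
  linarith

theorem boundaryEnergyGap_eq_zero (hf : IsCoerciveFrom f θ) (hfc : Continuous f) (hμ : 0 ≤ μ)
    {x : ℝ} (hx : x ∈ Ici θ) (hex : e x = √(2 * μ * (Fo f x - Fo f θ))) :
    boundaryEnergyGap f e θ μ x = 0 := by
  have hF := hf.Fo_sub_nonneg hfc hx
  rw [boundaryEnergyGap, hex, Real.sq_sqrt (by positivity)]
  ring

theorem tendsto_boundaryEnergyGap (hf : IsCoerciveFrom f θ) (hfc : Continuous f)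
    (hpq : LocallyUniformlyElliptic p q)
    (hosc : AsymptEquicontinuousAtOne fun ε s => p ε s * q ε s)
    (hu : ∀ ε > 0, IsMonotoneSol f (p ε) (q ε) θ ε 0 1 (u ε) (u' ε))
    (hη : ∀ ε > 0, ε * u' ε 1 ≤ η) (hu₁ : ∀ ε > 0, ε * u' ε 1 = e (u ε 1))
    (hμ : Tendsto (fun ε => q ε 1 / p ε 1) (𝓝[>] 0) (𝓝 μ)) :
    Tendsto (fun ε => boundaryEnergyGap f e θ μ (u ε 1)) (𝓝[>] 0) (𝓝 0) := by
  obtain ⟨B, hB⟩ := eventually_apply_one_le hf hpq hu hη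
  have hF_bdd : IsBoundedUnder (· ≤ ·) (𝓝[>] 0) (norm ∘ fun ε => Fo f (u ε 1) - Fo f θ) := by
    refine isBoundedUnder_of_eventually_le (a := Fo f B - Fo f θ) ?_
    filter_upwards [hB, self_mem_nhdsWithin] with ε hBε hε
    have hu1 : u ε 1 ∈ Ici θ := (hu ε hε).apply_mem 1 (right_mem_Icc.2 zero_le_one)
    rw [Function.comp_apply, Real.norm_of_nonneg (hf.Fo_sub_nonneg hfc hu1)]
    exact sub_le_sub_right ((hf.strictMonoOn_Fo hfc).monotoneOn hu1 (hu1.trans hBε) hBε) _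
  have hcoeff : Tendsto (fun ε => (μ - q ε 1 / p ε 1) * (Fo f (u ε 1) - Fo f θ))
      (𝓝[>] 0) (𝓝 0) :=
    Tendsto.zero_mul_isBoundedUnder_le (by simpa using hμ.const_sub μ) hF_bdd
  have hlim := hcoeff.sub (tendsto_energy_one hf hfc hpq hosc hu hη hB)
  rw [sub_zero] at hlim
  refine hlim.congr' ?_
  filter_upwards [self_mem_nhdsWithin] with ε hε
  rw [boundaryEnergyGap, hu₁ ε hε]
  ring

end Family

theorem stmt_16_general {f e : ℝ → ℝ} {p q u u' : ℝ → ℝ → ℝ} {θ₀ μ₀ p₀ : ℝ}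
    (hfc : Continuous f) (hf : IsCoerciveFrom f θ₀) (hec : ContinuousAt e p₀)
    (he_anti : AntitoneOn e (Ici θ₀)) (he_nonneg : ∀ x ∈ Ici θ₀, 0 ≤ e x)
    (hpq : LocallyUniformlyElliptic p q)
    (hosc : AsymptEquicontinuousAtOne fun ε s => p ε s * q ε s)
    (hμ : 0 < μ₀) (hp : θ₀ ≤ p₀) (hpe : e p₀ = √(2 * μ₀ * (Fo f p₀ - Fo f θ₀)))
    (hu : ∀ ε > 0, IsMonotoneSol f (p ε) (q ε) θ₀ ε 0 1 (u ε) (u' ε))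
    (hu₀ : ∀ ε > 0, u' ε 0 = 0) (hu₁ : ∀ ε > 0, ε * u' ε 1 = e (u ε 1)) :
    (∀ ε > 0, ∀ s ∈ Icc (0 : ℝ) 1, u ε s ≤ u ε 1) ∧
    (∃ M : ℝ, ∀ᶠ ε in 𝓝[>] 0, u ε 1 ≤ M) ∧
    (∀ s ∈ Ico (0 : ℝ) 1, Tendsto (fun ε => |u ε s - θ₀| + ε * |u' ε s|) (𝓝[>] 0) (𝓝 0)) ∧
    (Tendsto (fun ε => q ε 1 / p ε 1) (𝓝[>] 0) (𝓝 μ₀) →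
      Tendsto (fun ε => u ε 1) (𝓝[>] 0) (𝓝 p₀) ∧
      Tendsto (fun ε => ε * u' ε 1) (𝓝[>] 0) (𝓝 (e p₀))) := by
  have hone : (1 : ℝ) ∈ Icc 0 1 := right_mem_Icc.2 zero_le_one
  have hu1_mem : ∀ ε > 0, u ε 1 ∈ Ici θ₀ := fun ε hε => (hu ε hε).apply_mem 1 hone
  have hη : ∀ ε > 0, ε * u' ε 1 ≤ e θ₀ := fun ε hε =>
    (hu₁ ε hε).trans_le (he_anti self_mem_Ici (hu1_mem ε hε) (hu1_mem ε hε))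
  refine ⟨fun ε hε s hs => (hu ε hε).monotoneOn hs hone hs.2,
    eventually_apply_one_le hf hpq hu hη, fun s => tendsto_interior hf hpq hu hη hu₀,
    fun hlim => ?_⟩
  have hgap : Tendsto (fun ε => boundaryEnergyGap f e θ₀ μ₀ (u ε 1)) (𝓝[>] 0)
      (𝓝 (boundaryEnergyGap f e θ₀ μ₀ p₀)) := by
    rw [boundaryEnergyGap_eq_zero hf hfc hμ.le hp hpe]
    exact tendsto_boundaryEnergyGap hf hfc hpq hosc hu hη hu₁ hlim
  have happly : Tendsto (fun ε => u ε 1) (𝓝[>] 0) (𝓝 p₀) :=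
    tendsto_of_strictMonoOn_of_tendsto_comp ordConnected_Ici
      (strictMonoOn_boundaryEnergyGap hf hfc he_anti he_nonneg hμ) hp
      (eventually_mem_nhdsWithin.mono hu1_mem) hgap
  exact ⟨happly, (hec.tendsto.comp happly).congr'
    (eventually_mem_nhdsWithin.mono fun ε hε => (hu₁ ε hε).symm)⟩

theorem A1.isCoerciveFrom {τ θ₀ : ℝ} {f : ℝ → ℝ} (hf : A1 τ θ₀ f) : IsCoerciveFrom f θ₀ := by
  obtain ⟨hf1, -, ⟨c, hc, hderiv⟩, hzero⟩ := hf
  refine ⟨(monotone_of_deriv_nonneg (hf1.differentiable one_ne_zero)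
    fun t => hc.le.trans (hderiv t)).monotoneOn _, c, hc, fun t ht => ?_⟩
  simpa [hzero] using mul_sub_le_image_sub_of_le_deriv (hf1.differentiable one_ne_zero) hderiv ht

/-- The coefficient `s ↦ s^(N-1) g(s/ε)` of the radial equation in flux form, for `g = a` or
`g = b`. -/
def radialCoeff (N : ℕ) (g : ℝ → ℝ) (ε s : ℝ) : ℝ :=
  s ^ (N - 1) * g (s / ε)

theorem hasDerivAt_comp_div {g : ℝ → ℝ} (hg : Differentiable ℝ g) (ε s : ℝ) :
    HasDerivAt (fun x => g (x / ε)) (deriv g (s / ε) / ε) s :=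
  ((hg (s / ε)).hasDerivAt.comp s ((hasDerivAt_id s).div_const ε)).congr_deriv (by ring)

theorem hasDerivAt_radialCoeff {g : ℝ → ℝ} (hg : Differentiable ℝ g) (N : ℕ) (ε s : ℝ) :
    HasDerivAt (radialCoeff N g ε)
      (((N - 1 : ℕ) : ℝ) * s ^ (N - 1 - 1) * g (s / ε) + s ^ (N - 1) * (deriv g (s / ε) / ε)) s :=
  (hasDerivAt_pow (N - 1) s).mul (hasDerivAt_comp_div hg ε s)

theorem continuous_radialCoeff {g : ℝ → ℝ} (hg : Differentiable ℝ g) (N : ℕ) (ε : ℝ) :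
    Continuous (radialCoeff N g ε) :=
  continuous_iff_continuousAt.2 fun s => (hasDerivAt_radialCoeff hg N ε s).continuousAt

theorem IsSolE.isMonotoneSol {N : ℕ} {f e a b u u' : ℝ → ℝ} {θ₀ ε : ℝ}
    (h : IsSolE N f e a b θ₀ ε u u') (hN : 1 ≤ N) (hε : 0 < ε) (ha : Differentiable ℝ a)
    (ha₀ : ∀ r ≥ 0, a r ≠ 0) :
    IsMonotoneSol f (radialCoeff N a ε) (radialCoeff N b ε) θ₀ ε 0 1 u u' := by
  obtain ⟨hu, hderiv, hu', -, hode, -, -, hbounds⟩ := h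
  refine ⟨hu, (continuous_radialCoeff ha N ε).continuousOn.mul hu',
    fun s hs => (hderiv s (Ioo_subset_Ioc_self hs)).hasDerivAt (Icc_mem_nhds hs.1 hs.2),
    fun s hs => ?_, fun s hs => (hbounds s hs).1, fun s hs => (hbounds s hs).2⟩
  obtain ⟨d, hd, hode⟩ := hode s hs
  have ha_ne : a (s / ε) ≠ 0 := ha₀ _ (div_nonneg hs.1.le hε.le)
  have hs_ne : s ≠ 0 := hs.1.ne'
  have hpow : ((N - 1 : ℕ) : ℝ) * s ^ (N - 1 - 1) = ((N : ℝ) - 1) / s * s ^ (N - 1) := by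
    obtain rfl | hN' := hN.eq_or_lt
    · simp
    · rw [Nat.cast_sub hN, Nat.cast_one, ← Nat.sub_add_cancel (Nat.sub_pos_of_lt hN'),
        Nat.add_sub_cancel, pow_succ]
      field_simp
  refine ((hasDerivAt_radialCoeff ha N ε s).mul hd).congr_deriv ?_
  rw [(hasDerivAt_comp_div ha ε s).deriv] at hode
  rw [hpow, radialCoeff, radialCoeff, eq_div_iff (by positivity)]
  calc _ = s ^ (N - 1) * a (s / ε) * (ε ^ 2 * (d + (((N : ℝ) - 1) / s
            + deriv a (s / ε) / ε / a (s / ε)) * u' s)) := by field_simp; ring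
    _ = s ^ (N - 1) * b (s / ε) * f (u s) := by rw [hode]; field_simp

theorem mapsTo_radialCoeff {g : ℝ → ℝ} {m M ε l : ℝ} (N : ℕ) (hg : MapsTo g (Ici 0) (Icc m M))
    (hm : 0 ≤ m) (hε : 0 ≤ ε) (hl : 0 ≤ l) :
    MapsTo (radialCoeff N g ε) (Icc l 1) (Icc (l ^ (N - 1) * m) M) := by
  intro s hs
  have hs₀ : 0 ≤ s := hl.trans hs.1
  have hgs : g (s / ε) ∈ Icc m M := hg (div_nonneg hs₀ hε)
  exact ⟨mul_le_mul (pow_le_pow_left₀ hl hs.1 _) hgs.1 hm (pow_nonneg hs₀ _),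
    (mul_le_of_le_one_left (hm.trans hgs.1) (pow_le_one₀ hs₀ hs.2)).trans hgs.2⟩

theorem abs_radialCoeff_one_sub_le {g : ℝ → ℝ} {m M K ε s : ℝ} (N : ℕ) (hgd : Differentiable ℝ g)
    (hg : MapsTo g (Ici 0) (Icc m M)) (hm : 0 ≤ m) (hε : 0 ≤ ε) (hs : s ∈ Icc 0 1)
    (hK : ∀ x ∈ Ioo s 1, |deriv g (x / ε) / ε| ≤ K) :
    |radialCoeff N g ε 1 - radialCoeff N g ε s| ≤ (N * M + K) * (1 - s) := by
  rw [mul_sub]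
  refine abs_sub_le_sub_of_abs_deriv_le (h := fun x => (N * M + K) * x)
    (h' := fun _ => N * M + K) hs.2 (continuous_radialCoeff hgd N ε).continuousOn (by fun_prop)
    (fun x _ => hasDerivAt_radialCoeff hgd N ε x)
    (fun x _ => by simpa using (hasDerivAt_id x).const_mul (N * M + K)) ?_
  intro x hx
  have hx₀ : 0 ≤ x := hs.1.trans hx.1.le
  have hgx : g (x / ε) ∈ Icc m M := hg (div_nonneg hx₀ hε)
  have hpow (k : ℕ) : x ^ k ≤ 1 := pow_le_one₀ hx₀ hx.2.le
  have hcoeff : ((N - 1 : ℕ) : ℝ) * x ^ (N - 1 - 1) * g (x / ε) ≤ N * M := by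
    have hle : ((N - 1 : ℕ) : ℝ) * x ^ (N - 1 - 1) ≤ N :=
      (mul_le_of_le_one_right (Nat.cast_nonneg _) (hpow _)).trans (Nat.cast_le.2 (Nat.sub_le N 1))
    exact mul_le_mul hle hgx.2 (hm.trans hgx.1) (Nat.cast_nonneg N)
  refine (abs_add_le _ _).trans (add_le_add ?_ ?_)
  · rwa [abs_of_nonneg (mul_nonneg (by positivity) (hm.trans hgx.1))]
  · rw [abs_mul, abs_of_nonneg (pow_nonneg hx₀ _)]
    exact (mul_le_of_le_one_left (abs_nonneg _) (hpow _)).trans (hK x hx)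

namespace A3

variable {N : ℕ} {τ kstar : ℝ} {a b : ℝ → ℝ}

theorem differentiable (h : A3 N τ kstar a b) : Differentiable ℝ a ∧ Differentiable ℝ b :=
  ⟨h.1.differentiable two_ne_zero, h.2.1.differentiable one_ne_zero⟩

theorem exists_mapsTo_Icc (h : A3 N τ kstar a b) :
    ∃ m > 0, ∃ M, MapsTo a (Ici 0) (Icc m M) ∧ MapsTo b (Ici 0) (Icc m M) := by
  obtain ⟨-, -, -, -, ⟨M, hM⟩, ⟨m, hm₀, hm⟩, -⟩ := h
  exact ⟨m, hm₀, M, fun r hr => ⟨(hm r hr).1, (hM r hr).1⟩,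
    fun r hr => ⟨(hm r hr).2, (hM r hr).2⟩⟩

theorem isMonotoneSol {f e u u' : ℝ → ℝ} {θ₀ ε : ℝ} (h : A3 N τ kstar a b) (hN : 1 ≤ N)
    (hε : 0 < ε) (hu : IsSolE N f e a b θ₀ ε u u') :
    IsMonotoneSol f (radialCoeff N a ε) (radialCoeff N b ε) θ₀ ε 0 1 u u' := by
  obtain ⟨m, hm, M, ha, -⟩ := h.exists_mapsTo_Icc
  exact hu.isMonotoneSol hN hε h.differentiable.1 fun r hr => (hm.trans_le (ha hr).1).ne'

theorem locallyUniformlyElliptic (h : A3 N τ kstar a b) :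
    LocallyUniformlyElliptic (radialCoeff N a) (radialCoeff N b) := by
  obtain ⟨m, hm, M, ha, hb⟩ := h.exists_mapsTo_Icc
  refine fun l hl => ⟨l ^ (N - 1) * m, mul_pos (pow_pos hl.1 _) hm, M, ?_⟩
  filter_upwards [self_mem_nhdsWithin] with ε (hε : 0 < ε)
  exact ⟨mapsTo_radialCoeff N ha hm.le hε.le hl.1.le, mapsTo_radialCoeff N hb hm.le hε.le hl.1.le⟩

theorem eventually_mul_abs_deriv_le (h : A3 N τ kstar a b) :
    ∃ K, ∀ᶠ R in atTop, ∀ r ∈ Ico (kstar * R) R, R * |deriv a r| ≤ K ∧ R * |deriv b r| ≤ K := by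
  obtain ⟨ha, hb, -, -, -, -, -, -, L, -, hlim⟩ := h
  have hcont (R : ℝ) : Continuous fun r =>
      R * (|deriv a r| + |deriv b r|) + R ^ 2 * |deriv (deriv a) r| :=
    (((ha.continuous_deriv one_le_two).abs.add hb.continuous_deriv_one.abs).const_mul R).add
      ((ha.iterate_deriv' 1 1).continuous_deriv_one.abs.const_mul (R ^ 2))
  refine ⟨L + 1, ?_⟩
  filter_upwards [hlim.eventually_lt_const (lt_add_one L), eventually_ge_atTop 0]
    with R hsup hR r hr
  have hbdd : BddAbove ((fun r => R * (|deriv a r| + |deriv b r|) + R ^ 2 * |deriv (deriv a) r|) ''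
      Ico (kstar * R) R) :=
    (isCompact_Icc.image (hcont R)).bddAbove.mono (image_mono Ico_subset_Icc_self)
  have hle : R * (|deriv a r| + |deriv b r|) + R ^ 2 * |deriv (deriv a) r| ≤ L + 1 :=
    (le_csSup hbdd (mem_image_of_mem _ hr)).trans hsup.le
  have ha_nonneg : 0 ≤ R * |deriv a r| := by positivity
  have hb_nonneg : 0 ≤ R * |deriv b r| := by positivity
  have ha''_nonneg : 0 ≤ R ^ 2 * |deriv (deriv a) r| := by positivity
  constructor <;> linarith

theorem eventually_abs_deriv_div_le (h : A3 N τ kstar a b) :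
    ∃ K, ∀ᶠ ε in 𝓝[>] (0 : ℝ), ∀ s ∈ Ico kstar 1,
      |deriv a (s / ε) / ε| ≤ K ∧ |deriv b (s / ε) / ε| ≤ K := by
  obtain ⟨K, hK⟩ := h.eventually_mul_abs_deriv_le
  refine ⟨K, ?_⟩
  filter_upwards [tendsto_inv_nhdsGT_zero.eventually hK, self_mem_nhdsWithin]
    with ε hKε (hε : 0 < ε) s hs
  have hmem : s / ε ∈ Ico (kstar * ε⁻¹) ε⁻¹ := by
    rw [← div_eq_mul_inv, ← one_div]
    exact ⟨(div_le_div_iff_of_pos_right hε).2 hs.1, (div_lt_div_iff_of_pos_right hε).2 hs.2⟩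
  rw [abs_div, abs_div, abs_of_pos hε, div_eq_inv_mul |_|, div_eq_inv_mul |_|]
  exact hKε _ hmem

theorem asymptEquicontinuousAtOne (h : A3 N τ kstar a b) :
    AsymptEquicontinuousAtOne fun ε s => radialCoeff N a ε s * radialCoeff N b ε s := by
  obtain ⟨hk, hk₁⟩ : kstar ∈ Ioo (0 : ℝ) 1 := h.2.2.2.2.2.2.2.1
  obtain ⟨m, hm, M, ha, hb⟩ := h.exists_mapsTo_Icc
  obtain ⟨K, hK⟩ := h.eventually_abs_deriv_div_le
  intro ω hω
  have hlim : Tendsto (fun s : ℝ => 2 * M * ((N * M + K) * (1 - s))) (𝓝[<] 1) (𝓝 0) :=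
    tendsto_nhdsWithin_of_tendsto_nhds (Continuous.tendsto' (by fun_prop) _ _ (by simp))
  obtain ⟨l, hl, hlω⟩ :=
    (mem_nhdsLT_iff_exists_mem_Ico_Ioo_subset hk₁).1 (hlim.eventually_le_const hω)
  refine ⟨l, ⟨hk.trans_le hl.1, hl.2⟩, ?_⟩
  filter_upwards [hK, self_mem_nhdsWithin] with ε hKε (hε : 0 < ε) s hs
  have hs₀ : 0 ≤ s := (hk.trans_le (hl.1.trans hs.1.le)).le
  have hs_mem : s ∈ Icc 0 1 := ⟨hs₀, hs.2.le⟩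
  have hstar (x : ℝ) (hx : x ∈ Ioo s 1) : x ∈ Ico kstar 1 :=
    ⟨hl.1.trans (hs.1.trans hx.1).le, hx.2⟩
  have hlow : 0 ≤ s ^ (N - 1) * m := by positivity
  have hp_mem := mapsTo_radialCoeff N ha hm.le hε.le hs₀ (right_mem_Icc.2 hs.2.le)
  have hq_mem := mapsTo_radialCoeff N hb hm.le hε.le hs₀ (left_mem_Icc.2 hs.2.le)
  have hp_sub := abs_radialCoeff_one_sub_le N h.differentiable.1 ha hm.le hε.le hs_mem
    fun x hx => (hKε x (hstar x hx)).1
  have hq_sub := abs_radialCoeff_one_sub_le N h.differentiable.2 hb hm.le hε.le hs_mem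
    fun x hx => (hKε x (hstar x hx)).2
  rw [abs_sub_comm]
  exact (abs_mul_sub_mul_le (Icc_subset_Icc_left hlow hp_mem) (Icc_subset_Icc_left hlow hq_mem)
    hp_sub hq_sub).trans (hlω hs)

end A3

/-- `u_ε(1) = max u_ε` is uniformly bounded, interior decay, and the
leading boundary asymptotics `u_ε(1) → p₀`, `ε u_ε'(1) → e(p₀)` when `β_ε(1)/α_ε(1) → μ₀`. -/
theorem stmt_16 (N : ℕ) (hN : 2 ≤ N) (τ θ₀ kstar μ₀ p₀ : ℝ) (hτ : τ ∈ Set.Ioo (0:ℝ) 1)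
    (f e a b : ℝ → ℝ) (hf : A1 τ θ₀ f) (he : A2 τ e) (hab : A3 N τ kstar a b)
    (hμ : 0 < μ₀)
    (hp : θ₀ < p₀) (hpe : e p₀ = Real.sqrt (2 * μ₀ * (Fo f p₀ - Fo f θ₀)))
    (u u' : ℝ → ℝ → ℝ)
    (hu : ∀ ε > 0, IsSolE N f e a b θ₀ ε (u ε) (u' ε)) :
    (∀ ε > 0, ∀ s ∈ Set.Icc (0:ℝ) 1, u ε s ≤ u ε 1) ∧
    (∃ M : ℝ, ∀ᶠ ε in nhdsWithin (0:ℝ) (Set.Ioi 0), u ε 1 ≤ M) ∧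
    (∀ s ∈ Set.Ico (0:ℝ) 1,
      Tendsto (fun ε : ℝ => |u ε s - θ₀| + ε * |u' ε s|)
        (nhdsWithin (0:ℝ) (Set.Ioi 0)) (nhds 0)) ∧
    (Tendsto (fun ε : ℝ => b (1 / ε) / a (1 / ε))
        (nhdsWithin (0:ℝ) (Set.Ioi 0)) (nhds μ₀) →
      Tendsto (fun ε : ℝ => u ε 1) (nhdsWithin (0:ℝ) (Set.Ioi 0)) (nhds p₀) ∧
      Tendsto (fun ε : ℝ => ε * u' ε 1) (nhdsWithin (0:ℝ) (Set.Ioi 0)) (nhds (e p₀))) := by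
  simpa only [radialCoeff, one_pow, one_mul] using
    stmt_16_general hf.1.continuous hf.isCoerciveFrom he.1.continuous.continuousAt
      (he.2.2.1.antitoneOn _) (fun x _ => (he.2.2.2 x).le) hab.locallyUniformlyElliptic
      hab.asymptEquicontinuousAtOne hμ hp.le hpe
      (fun ε hε => hab.isMonotoneSol (one_le_two.trans hN) hε (hu ε hε))
      (fun ε hε => (hu ε hε).2.2.2.2.2.1) (fun ε hε => (hu ε hε).2.2.2.2.2.2.1)
end
end

section
/- There exist ε* > 0 and a constant C̃ > 0, independent of ε, such that for all ε ∈ (0, ε*) and all s ∈ [k*, 1], | ε u_ε'(s) − √( (2 β_ε(s)/α_ε(s)) (F(u_ε(s)) − F(θ₀)) ) | ≤ C̃ ε^{1/2}. -/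
open Filter Set MeasureTheory

noncomputable section

/-!
With the weights `p = s^(N-1) a(s/ε)`, `q = s^(N-1) b(s/ε)` and the flux `v = ε p u'`, the equation
is the Hamiltonian system `ε u' = v / p`, `ε v' = q f(u)`, whose energy
`E = v² / 2 - p q (F(u) - F(θ₀))` satisfies `E' = -(p q)' (F(u) - F(θ₀))`. Both `u` and `v` are
nondecreasing and `v(1) = O(1)`, so integrating `ε v' = q f(u)` over a layer of width `ε` bounds
`u(1)`. Hence `F(u) - F(θ₀) ≤ K f(u) = K ε v' / q`, and `E` varies by `O(ε)` on `[k*, 1]`.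
Monotonicity also gives `f(u(k*)) = O(ε)` and `v(k*) = O(ε)`, hence `E(k*) = O(ε)`. Thus `E = O(ε)`,
which becomes `O(√ε)` when the square of `ε u'` is undone.
-/

section RealLemmas

variable {x y θ t : ℝ} {f g g' h h' : ℝ → ℝ}

lemma sub_le_sub_of_hasDerivAt_le (hxy : x ≤ y) (hg : ContinuousOn g (Icc x y))
    (hh : ContinuousOn h (Icc x y)) (hg' : ∀ s ∈ Ioo x y, HasDerivAt g (g' s) s)
    (hh' : ∀ s ∈ Ioo x y, HasDerivAt h (h' s) s) (hle : ∀ s ∈ Ioo x y, g' s ≤ h' s) :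
    g y - g x ≤ h y - h x := by
  have hmono : MonotoneOn (fun s ↦ h s - g s) (Icc x y) := by
    refine monotoneOn_of_hasDerivWithinAt_nonneg (f' := fun s ↦ h' s - g' s) (convex_Icc x y)
      (hh.sub hg) ?_ ?_ <;> rw [interior_Icc]
    · exact fun s hs ↦ ((hh' s hs).sub (hg' s hs)).hasDerivWithinAt
    · exact fun s hs ↦ sub_nonneg.2 (hle s hs)
  linarith [hmono (left_mem_Icc.2 hxy) (right_mem_Icc.2 hxy) hxy]

lemma abs_sub_le_sub_of_abs_hasDerivAt_le (hxy : x ≤ y) (hg : ContinuousOn g (Icc x y))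
    (hh : ContinuousOn h (Icc x y)) (hg' : ∀ s ∈ Ioo x y, HasDerivAt g (g' s) s)
    (hh' : ∀ s ∈ Ioo x y, HasDerivAt h (h' s) s) (hle : ∀ s ∈ Ioo x y, |g' s| ≤ h' s) :
    |g y - g x| ≤ h y - h x := by
  refine abs_le'.2 ⟨sub_le_sub_of_hasDerivAt_le hxy hg hh hg' hh' fun s hs ↦
    (le_abs_self _).trans (hle s hs), ?_⟩
  have := sub_le_sub_of_hasDerivAt_le hxy hg.neg hh (fun s hs ↦ (hg' s hs).neg) hh' fun s hs ↦
    (neg_le_abs _).trans (hle s hs)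
  simp only [Pi.neg_apply] at this
  linarith

lemma integral_nonneg_of_monotone (hf : Monotone f) (hfθ : 0 ≤ f θ) (ht : θ ≤ t) :
    0 ≤ ∫ x in θ..t, f x :=
  intervalIntegral.integral_nonneg ht fun _ hx ↦ hfθ.trans (hf hx.1)

lemma integral_le_sub_mul_of_monotone (hf : Monotone f) (ht : θ ≤ t) :
    ∫ x in θ..t, f x ≤ (t - θ) * f t := by
  calc ∫ x in θ..t, f x ≤ ∫ _ in θ..t, f t :=
        intervalIntegral.integral_mono_on ht hf.intervalIntegrable intervalIntegrable_const
          fun _ hx ↦ hf hx.2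
    _ = (t - θ) * f t := by rw [intervalIntegral.integral_const, smul_eq_mul]

lemma abs_sub_sqrt_le (hx : 0 ≤ x) (hy : 0 ≤ y) : |x - √y| ≤ √|x ^ 2 - y| := by
  refine Real.le_sqrt_of_sq_le ?_
  have hsum : |x - √y| ≤ |x + √y| := by
    rw [abs_of_nonneg (add_nonneg hx (Real.sqrt_nonneg y)), abs_le]
    constructor <;> linarith [Real.sqrt_nonneg y]
  calc |x - √y| ^ 2 ≤ |x + √y| * |x - √y| := by
        rw [sq]; exact mul_le_mul_of_nonneg_right hsum (abs_nonneg _)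
    _ = |x ^ 2 - y| := by rw [← abs_mul, ← sq_sub_sq, Real.sq_sqrt hy]

end RealLemmas

/-- `(u, v)` solves the first-order form `ε u' = v / p`, `ε v' = q f(u)` of `ε² (p u')' = q f(u)` on
`[x₀, x₁]`, where `v = ε p u'` is the flux, with coefficients in `[c, M]`, `u ≥ θ` and `v ≥ 0`. -/
structure IsFluxSolution (p q f : ℝ → ℝ) (c M θ ε x₀ x₁ : ℝ) (u v : ℝ → ℝ) : Prop where
  eps_pos : 0 < ε
  c_pos : 0 < c
  p_mem : ∀ s ∈ Icc x₀ x₁, p s ∈ Icc c M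
  q_mem : ∀ s ∈ Icc x₀ x₁, q s ∈ Icc c M
  continuousOn_u : ContinuousOn u (Icc x₀ x₁)
  continuousOn_v : ContinuousOn v (Icc x₀ x₁)
  hasDerivAt_u : ∀ s ∈ Ioo x₀ x₁, HasDerivAt u (v s / (ε * p s)) s
  hasDerivAt_v : ∀ s ∈ Ioo x₀ x₁, HasDerivAt v (q s * f (u s) / ε) s
  le_u : ∀ s ∈ Icc x₀ x₁, θ ≤ u s
  v_nonneg : ∀ s ∈ Icc x₀ x₁, 0 ≤ v s

/-- The energy `v² / 2 - p q ∫_θ^u f`, a Hamiltonian of the system in `IsFluxSolution` when `p` and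
`q` are constant. -/
def fluxEnergy (p q f : ℝ → ℝ) (θ : ℝ) (u v : ℝ → ℝ) (s : ℝ) : ℝ :=
  v s ^ 2 / 2 - p s * q s * ∫ t in θ..u s, f t

namespace IsFluxSolution

variable {p q f u v : ℝ → ℝ} {c M θ ε x₀ x₁ y₀ y₁ s A K T D : ℝ}

lemma mono (h : IsFluxSolution p q f c M θ ε x₀ x₁ u v) (h₀ : x₀ ≤ y₀) (h₁ : y₁ ≤ x₁) :
    IsFluxSolution p q f c M θ ε y₀ y₁ u v := by
  have hIcc := Icc_subset_Icc h₀ h₁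
  have hIoo := Ioo_subset_Ioo h₀ h₁
  exact ⟨h.eps_pos, h.c_pos, fun s hs ↦ h.p_mem s (hIcc hs), fun s hs ↦ h.q_mem s (hIcc hs),
    h.continuousOn_u.mono hIcc, h.continuousOn_v.mono hIcc, fun s hs ↦ h.hasDerivAt_u s (hIoo hs),
    fun s hs ↦ h.hasDerivAt_v s (hIoo hs), fun s hs ↦ h.le_u s (hIcc hs),
    fun s hs ↦ h.v_nonneg s (hIcc hs)⟩

lemma p_pos (h : IsFluxSolution p q f c M θ ε x₀ x₁ u v) (hs : s ∈ Icc x₀ x₁) : 0 < p s :=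
  h.c_pos.trans_le (h.p_mem s hs).1

lemma q_pos (h : IsFluxSolution p q f c M θ ε x₀ x₁ u v) (hs : s ∈ Icc x₀ x₁) : 0 < q s :=
  h.c_pos.trans_le (h.q_mem s hs).1

lemma u_left_le_right (h : IsFluxSolution p q f c M θ ε x₀ x₁ u v) (hx : x₀ ≤ x₁) :
    u x₀ ≤ u x₁ := by
  have hu := sub_le_sub_of_hasDerivAt_le hx continuousOn_const h.continuousOn_u
    (fun s _ ↦ hasDerivAt_const s 0) h.hasDerivAt_u fun s hs ↦ by
      have hs' := Ioo_subset_Icc_self hs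
      exact div_nonneg (h.v_nonneg s hs') (mul_pos h.eps_pos (h.p_pos hs')).le
  linarith

lemma hasDerivAt_fluxEnergy (h : IsFluxSolution p q f c M θ ε x₀ x₁ u v) (hfc : Continuous f)
    (hpq : DifferentiableAt ℝ (p * q) s) (hs : s ∈ Ioo x₀ x₁) :
    HasDerivAt (fluxEnergy p q f θ u v) (-(deriv (p * q) s * ∫ t in θ..u s, f t)) s := by
  have hp := (h.p_pos (Ioo_subset_Icc_self hs)).ne'
  have hε := h.eps_pos.ne'
  have hF : HasDerivAt (fun t ↦ ∫ x in θ..t, f x) (f (u s)) (u s) :=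
    (hfc.integral_hasStrictDerivAt θ (u s)).hasDerivAt
  refine HasDerivAt.congr_deriv ((((h.hasDerivAt_v s hs).pow 2).div_const 2).sub
    (hpq.hasDerivAt.mul (hF.comp s (h.hasDerivAt_u s hs)))) ?_
  simp only [Pi.mul_apply]
  field_simp
  ring

lemma continuousOn_fluxEnergy (h : IsFluxSolution p q f c M θ ε x₀ x₁ u v) (hfc : Continuous f)
    (hpq : ContinuousOn (p * q) (Icc x₀ x₁)) :
    ContinuousOn (fluxEnergy p q f θ u v) (Icc x₀ x₁) :=
  ((h.continuousOn_v.pow 2).div_const 2).sub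
    (hpq.mul ((intervalIntegral.continuous_primitive (fun _ _ ↦ hfc.intervalIntegrable _ _)
      θ).comp_continuousOn h.continuousOn_u))

section MonotoneSource

variable (hf : Monotone f) (hfθ : 0 ≤ f θ)
include hf hfθ

lemma f_nonneg (h : IsFluxSolution p q f c M θ ε x₀ x₁ u v) (hs : s ∈ Icc x₀ x₁) : 0 ≤ f (u s) :=
  hfθ.trans (hf (h.le_u s hs))

lemma le_v_sub (h : IsFluxSolution p q f c M θ ε x₀ x₁ u v) (hx : x₀ ≤ x₁) :
    c * f (u x₀) / ε * (x₁ - x₀) ≤ v x₁ - v x₀ := by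
  rw [mul_sub]
  refine sub_le_sub_of_hasDerivAt_le (g := fun s ↦ c * f (u x₀) / ε * s) hx
    (continuousOn_const.mul continuousOn_id) h.continuousOn_v
    (fun s _ ↦ (hasDerivAt_id s).const_mul _) h.hasDerivAt_v fun s hs ↦ ?_
  have hs' := Ioo_subset_Icc_self hs
  have hfu : f (u x₀) ≤ f (u s) := hf ((h.mono le_rfl hs'.2).u_left_le_right hs'.1)
  rw [mul_one]
  exact div_le_div_of_nonneg_right (mul_le_mul (h.q_mem s hs').1 hfu
    (h.f_nonneg hf hfθ (left_mem_Icc.2 hx)) (h.q_pos hs').le) h.eps_pos.le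

lemma v_left_le_right (h : IsFluxSolution p q f c M θ ε x₀ x₁ u v) (hx : x₀ ≤ x₁) :
    v x₀ ≤ v x₁ := by
  have hf₀ := h.f_nonneg hf hfθ (left_mem_Icc.2 hx)
  have hslope : 0 ≤ c * f (u x₀) / ε := div_nonneg (mul_nonneg h.c_pos.le hf₀) h.eps_pos.le
  exact sub_nonneg.1 ((mul_nonneg hslope (sub_nonneg.2 hx)).trans (h.le_v_sub hf hfθ hx))

lemma u_sub_le (h : IsFluxSolution p q f c M θ ε x₀ x₁ u v) (hx : x₀ ≤ x₁) :
    u x₁ - u x₀ ≤ v x₁ / (ε * c) * (x₁ - x₀) := by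
  rw [mul_sub]
  refine sub_le_sub_of_hasDerivAt_le (h := fun s ↦ v x₁ / (ε * c) * s) hx h.continuousOn_u
    (continuousOn_const.mul continuousOn_id) h.hasDerivAt_u
    (fun s _ ↦ (hasDerivAt_id s).const_mul _) fun s hs ↦ ?_
  have hs' := Ioo_subset_Icc_self hs
  rw [mul_one]
  exact div_le_div₀ (h.v_nonneg x₁ (right_mem_Icc.2 hx))
    ((h.mono hs'.1 le_rfl).v_left_le_right hf hfθ hs'.2) (mul_pos h.eps_pos h.c_pos)
    (mul_le_mul_of_nonneg_left (h.p_mem s hs').1 h.eps_pos.le)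

lemma le_u_sub (h : IsFluxSolution p q f c M θ ε x₀ x₁ u v) (hx : x₀ ≤ x₁) :
    v x₀ / (ε * M) * (x₁ - x₀) ≤ u x₁ - u x₀ := by
  rw [mul_sub]
  refine sub_le_sub_of_hasDerivAt_le (g := fun s ↦ v x₀ / (ε * M) * s) hx
    (continuousOn_const.mul continuousOn_id) h.continuousOn_u
    (fun s _ ↦ (hasDerivAt_id s).const_mul _) h.hasDerivAt_u fun s hs ↦ ?_
  have hs' := Ioo_subset_Icc_self hs
  rw [mul_one]
  exact div_le_div₀ (h.v_nonneg s hs') ((h.mono le_rfl hs'.2).v_left_le_right hf hfθ hs'.1)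
    (mul_pos h.eps_pos (h.p_pos hs')) (mul_le_mul_of_nonneg_left (h.p_mem s hs').2 h.eps_pos.le)

-- Over the layer `[x₁ - ε, x₁]` the flux forces `c f(u) ≤ A` at the left end, while `u` grows by
-- at most `A / c`.
lemma u_right_le (h : IsFluxSolution p q f c M θ ε x₀ x₁ u v) (hε : ε ≤ x₁ - x₀) (hv : v x₁ ≤ A)
    (hT : A < c * f T) : u x₁ ≤ T + A / c := by
  have hεpos := h.eps_pos
  have hlen : x₁ - (x₁ - ε) = ε := sub_sub_cancel x₁ ε
  have hlayer := h.mono (y₀ := x₁ - ε) (by linarith) le_rfl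
  have hle : x₁ - ε ≤ x₁ := by linarith
  have hflux := hlayer.le_v_sub hf hfθ hle
  have hgrowth := hlayer.u_sub_le hf hfθ hle
  rw [hlen] at hflux hgrowth
  rw [div_mul_cancel₀ _ hεpos.ne'] at hflux
  have hleft : u (x₁ - ε) < T := by
    refine hf.reflect_lt (lt_of_mul_lt_mul_left ?_ h.c_pos.le)
    linarith [hlayer.v_nonneg _ (left_mem_Icc.2 hle)]
  have hinc : v x₁ / (ε * c) * ε ≤ A / c := by
    rw [div_mul_eq_div_div, div_right_comm, div_mul_cancel₀ _ hεpos.ne']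
    exact div_le_div_of_nonneg_right hv h.c_pos.le
  linarith

lemma integral_le_mul (h : IsFluxSolution p q f c M θ ε x₀ x₁ u v) (hK : u x₁ - θ ≤ K)
    (hs : s ∈ Icc x₀ x₁) : ∫ t in θ..u s, f t ≤ K * f (u s) := by
  have hus := (h.mono hs.1 le_rfl).u_left_le_right hs.2
  exact (integral_le_sub_mul_of_monotone hf (h.le_u s hs)).trans
    (mul_le_mul_of_nonneg_right (by linarith) (h.f_nonneg hf hfθ hs))

lemma v_left_le (h : IsFluxSolution p q f c M θ ε x₀ x₁ u v) (hx : x₀ < x₁) (hK : u x₁ - θ ≤ K) :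
    v x₀ ≤ ε * M * K / (x₁ - x₀) := by
  have hmem : x₀ ∈ Icc x₀ x₁ := left_mem_Icc.2 hx.le
  have hεM : 0 < ε * M := mul_pos h.eps_pos ((h.p_pos hmem).trans_le (h.p_mem x₀ hmem).2)
  have hgrowth : u x₁ - u x₀ ≤ K := by linarith [h.le_u x₀ hmem]
  have hu := (h.le_u_sub hf hfθ hx.le).trans hgrowth
  rwa [div_mul_eq_mul_div, div_le_iff₀' hεM, ← le_div_iff₀ (sub_pos.2 hx)] at hu

lemma f_left_le (h : IsFluxSolution p q f c M θ ε x₀ x₁ u v) (hx : x₀ < x₁) (hv : v x₁ ≤ A) :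
    f (u x₀) ≤ ε * A / (c * (x₁ - x₀)) := by
  have hflux : v x₁ - v x₀ ≤ A := by linarith [h.v_nonneg x₀ (left_mem_Icc.2 hx.le)]
  have hvsub := (h.le_v_sub hf hfθ hx.le).trans hflux
  rw [div_mul_eq_mul_div, div_le_iff₀' h.eps_pos, mul_right_comm] at hvsub
  exact (le_div_iff₀' (mul_pos h.c_pos (sub_pos.2 hx))).2 hvsub

lemma abs_fluxEnergy_left_le (h : IsFluxSolution p q f c M θ ε x₀ x₁ u v) (hx : x₀ < x₁)
    (hv : v x₁ ≤ A) (hK : u x₁ - θ ≤ K) :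
    |fluxEnergy p q f θ u v x₀| ≤ A * K * M * (1 + M / c) / (x₁ - x₀) * ε := by
  have hmem : x₀ ∈ Icc x₀ x₁ := left_mem_Icc.2 hx.le
  have hM : 0 < M := (h.p_pos hmem).trans_le (h.p_mem x₀ hmem).2
  have hv₀ := h.v_nonneg x₀ hmem
  have hvA : v x₀ ≤ A := (h.v_left_le_right hf hfθ hx.le).trans hv
  have hK₀ : 0 ≤ K := by linarith [h.le_u x₁ (right_mem_Icc.2 hx.le)]
  have hI₀ := integral_nonneg_of_monotone hf hfθ (h.le_u x₀ hmem)
  have hpq : p x₀ * q x₀ ≤ M * M :=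
    mul_le_mul (h.p_mem x₀ hmem).2 (h.q_mem x₀ hmem).2 (h.q_pos hmem).le hM.le
  calc |fluxEnergy p q f θ u v x₀|
      ≤ v x₀ ^ 2 / 2 + p x₀ * q x₀ * ∫ t in θ..u x₀, f t := by
        have hpqI := mul_nonneg (mul_pos (h.p_pos hmem) (h.q_pos hmem)).le hI₀
        rw [fluxEnergy, abs_le]
        constructor <;> linarith [sq_nonneg (v x₀)]
    _ ≤ A * v x₀ + M * M * (K * f (u x₀)) := by
        refine add_le_add (by nlinarith) ?_
        exact mul_le_mul hpq (h.integral_le_mul hf hfθ hK hmem) hI₀ (mul_pos hM hM).le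
    _ ≤ A * (ε * M * K / (x₁ - x₀)) + M * M * (K * (ε * A / (c * (x₁ - x₀)))) := by
        gcongr
        exacts [hv₀.trans hvA, h.v_left_le hf hfθ hx hK, h.f_left_le hf hfθ hx hv]
    _ = A * K * M * (1 + M / c) / (x₁ - x₀) * ε := by
        have hc := h.c_pos.ne'
        have hℓ := (sub_pos.2 hx).ne'
        field_simp

lemma abs_fluxEnergy_sub_le (h : IsFluxSolution p q f c M θ ε x₀ x₁ u v) (hfc : Continuous f)
    (hpq : ∀ s ∈ Icc x₀ x₁, DifferentiableAt ℝ (p * q) s)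
    (hD : ∀ s ∈ Ioo x₀ x₁, |deriv (p * q) s| ≤ D) (hx : x₀ ≤ x₁) (hK : u x₁ - θ ≤ K) :
    |fluxEnergy p q f θ u v x₁ - fluxEnergy p q f θ u v x₀| ≤
      D * K / c * ε * (v x₁ - v x₀) := by
  have hpqc : ContinuousOn (p * q) (Icc x₀ x₁) := fun s hs ↦
    (hpq s hs).continuousAt.continuousWithinAt
  have hK₀ : 0 ≤ K := by linarith [h.le_u x₁ (right_mem_Icc.2 hx)]
  rw [mul_sub]
  refine abs_sub_le_sub_of_abs_hasDerivAt_le hx (h.continuousOn_fluxEnergy hfc hpqc)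
    (continuousOn_const.mul h.continuousOn_v)
    (fun s hs ↦ h.hasDerivAt_fluxEnergy hfc (hpq s (Ioo_subset_Icc_self hs)) hs)
    (fun s hs ↦ (h.hasDerivAt_v s hs).const_mul (D * K / c * ε)) fun s hs ↦ ?_
  have hs' := Ioo_subset_Icc_self hs
  have hI₀ := integral_nonneg_of_monotone hf hfθ (h.le_u s hs')
  have hf₀ := h.f_nonneg hf hfθ hs'
  have hD₀ : 0 ≤ D := (abs_nonneg _).trans (hD s hs)
  have hq : 1 ≤ q s / c := (one_le_div h.c_pos).2 (h.q_mem s hs').1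
  calc |-(deriv (p * q) s * ∫ t in θ..u s, f t)|
      = |deriv (p * q) s| * ∫ t in θ..u s, f t := by rw [abs_neg, abs_mul, abs_of_nonneg hI₀]
    _ ≤ D * (K * f (u s)) := mul_le_mul (hD s hs) (h.integral_le_mul hf hfθ hK hs') hI₀ hD₀
    _ ≤ D * (K * f (u s)) * (q s / c) := le_mul_of_one_le_right (by positivity) hq
    _ = D * K / c * ε * (q s * f (u s) / ε) := by
        have := h.eps_pos.ne'
        field_simp

theorem abs_fluxEnergy_le (h : IsFluxSolution p q f c M θ ε x₀ x₁ u v) (hfc : Continuous f)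
    (hpq : ∀ s ∈ Icc x₀ x₁, DifferentiableAt ℝ (p * q) s)
    (hD : ∀ s ∈ Ioo x₀ x₁, |deriv (p * q) s| ≤ D) (hx : x₀ < x₁) (hv : v x₁ ≤ A)
    (hK : u x₁ - θ ≤ K) (hs : s ∈ Icc x₀ x₁) :
    |fluxEnergy p q f θ u v s| ≤ A * K * (M * (1 + M / c) / (x₁ - x₀) + D / c) * ε := by
  obtain ⟨z, hz⟩ := nonempty_Ioo.2 hx
  have hε := h.eps_pos
  have hc := h.c_pos
  have hD₀ : 0 ≤ D := (abs_nonneg _).trans (hD z hz)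
  have hK₀ : 0 ≤ K := by linarith [h.le_u x₁ (right_mem_Icc.2 hx.le)]
  have hleft := h.mono le_rfl hs.2
  have hus : u s - θ ≤ K := by linarith [(h.mono hs.1 le_rfl).u_left_le_right hs.2]
  have hvs : v s - v x₀ ≤ A := by
    linarith [(h.mono hs.1 le_rfl).v_left_le_right hf hfθ hs.2,
      h.v_nonneg x₀ (left_mem_Icc.2 hx.le)]
  calc |fluxEnergy p q f θ u v s|
      ≤ |fluxEnergy p q f θ u v x₀| + |fluxEnergy p q f θ u v s - fluxEnergy p q f θ u v x₀| := by
        simpa only [add_sub_cancel] using abs_add_le (fluxEnergy p q f θ u v x₀)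
          (fluxEnergy p q f θ u v s - fluxEnergy p q f θ u v x₀)
    _ ≤ A * K * M * (1 + M / c) / (x₁ - x₀) * ε + D * K / c * ε * (v s - v x₀) :=
        add_le_add (h.abs_fluxEnergy_left_le hf hfθ hx hv hK)
          (hleft.abs_fluxEnergy_sub_le hf hfθ hfc (fun r hr ↦ hpq r ⟨hr.1, hr.2.trans hs.2⟩)
            (fun r hr ↦ hD r ⟨hr.1, hr.2.trans_le hs.2⟩) hs.1 hus)
    _ ≤ A * K * M * (1 + M / c) / (x₁ - x₀) * ε + D * K / c * ε * A := by gcongr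
    _ = A * K * (M * (1 + M / c) / (x₁ - x₀) + D / c) * ε := by ring

end MonotoneSource

end IsFluxSolution

/-- The coefficient of the radial operator in the rescaled variable `s = ε r`, that is
`s^(N-1) a(s/ε)`. -/
def radialWeight (N : ℕ) (a : ℝ → ℝ) (ε s : ℝ) : ℝ := s ^ (N - 1) * a (s / ε)

section RadialWeight

variable {N : ℕ} {a b : ℝ → ℝ} {ε s k c M D : ℝ}

lemma radialWeight_mem_Icc (hk : 0 ≤ k) (hs : s ∈ Icc k 1) (hc : 0 ≤ c)
    (ha : a (s / ε) ∈ Icc c M) : radialWeight N a ε s ∈ Icc (k ^ (N - 1) * c) M := by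
  have hs₀ : 0 ≤ s := hk.trans hs.1
  refine ⟨mul_le_mul (pow_le_pow_left₀ hk hs.1 _) ha.1 hc (pow_nonneg hs₀ _), ?_⟩
  exact (mul_le_of_le_one_left (hc.trans ha.1) (pow_le_one₀ hs₀ hs.2)).trans ha.2

lemma hasDerivAt_comp_div_const (ha : DifferentiableAt ℝ a (s / ε)) :
    HasDerivAt (fun t ↦ a (t / ε)) (deriv a (s / ε) / ε) s :=
  (ha.hasDerivAt.comp s ((hasDerivAt_id s).div_const ε)).congr_deriv (mul_one_div _ _)

lemma hasDerivAt_radialWeight (ha : DifferentiableAt ℝ a (s / ε)) :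
    HasDerivAt (radialWeight N a ε)
      (((N - 1 : ℕ) : ℝ) * s ^ (N - 1 - 1) * a (s / ε) + s ^ (N - 1) * (deriv a (s / ε) / ε)) s :=
  (hasDerivAt_pow (N - 1) s).mul (hasDerivAt_comp_div_const ha)

lemma abs_deriv_radialWeight_le (ha : DifferentiableAt ℝ a (s / ε)) (hs : s ∈ Icc 0 1)
    (haM : a (s / ε) ∈ Icc 0 M) (hD : |deriv a (s / ε) / ε| ≤ D) :
    |deriv (radialWeight N a ε) s| ≤ ((N - 1 : ℕ) : ℝ) * M + D := by
  have hpow (n : ℕ) : s ^ n ∈ Icc 0 1 := ⟨pow_nonneg hs.1 n, pow_le_one₀ hs.1 hs.2⟩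
  rw [(hasDerivAt_radialWeight ha).deriv]
  refine (abs_add_le _ _).trans (add_le_add ?_ ?_)
  · rw [abs_of_nonneg (mul_nonneg (mul_nonneg (Nat.cast_nonneg _) (hpow _).1) haM.1), mul_assoc]
    exact mul_le_mul_of_nonneg_left
      ((mul_le_of_le_one_left haM.1 (hpow _).2).trans haM.2) (Nat.cast_nonneg _)
  · rw [abs_mul, abs_of_nonneg (hpow _).1]
    exact (mul_le_of_le_one_left (abs_nonneg _) (hpow _).2).trans hD

lemma abs_deriv_mul_radialWeight_le (ha : DifferentiableAt ℝ a (s / ε))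
    (hb : DifferentiableAt ℝ b (s / ε)) (hs : s ∈ Icc 0 1) (haM : a (s / ε) ∈ Icc 0 M)
    (hbM : b (s / ε) ∈ Icc 0 M) (hD : |deriv a (s / ε) / ε| + |deriv b (s / ε) / ε| ≤ D) :
    |deriv (radialWeight N a ε * radialWeight N b ε) s| ≤
      2 * M * (((N - 1 : ℕ) : ℝ) * M + D) := by
  have hp := abs_deriv_radialWeight_le (N := N) ha hs haM
    ((le_add_of_nonneg_right (abs_nonneg _)).trans hD)
  have hq := abs_deriv_radialWeight_le (N := N) hb hs hbM
    ((le_add_of_nonneg_left (abs_nonneg _)).trans hD)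
  have hweight {g : ℝ → ℝ} (hg : g (s / ε) ∈ Icc 0 M) : |radialWeight N g ε s| ≤ M := by
    have hmem := radialWeight_mem_Icc (N := N) le_rfl hs le_rfl hg
    rw [mul_zero] at hmem
    rw [abs_of_nonneg hmem.1]
    exact hmem.2
  have hM : 0 ≤ M := haM.1.trans haM.2
  rw [deriv_mul (hasDerivAt_radialWeight ha).differentiableAt
    (hasDerivAt_radialWeight hb).differentiableAt]
  calc _ ≤ |deriv (radialWeight N a ε) s| * |radialWeight N b ε s| +
        |radialWeight N a ε s| * |deriv (radialWeight N b ε) s| := by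
        simpa only [abs_mul] using abs_add_le (deriv (radialWeight N a ε) s * radialWeight N b ε s)
          (radialWeight N a ε s * deriv (radialWeight N b ε) s)
    _ ≤ (((N - 1 : ℕ) : ℝ) * M + D) * M + M * (((N - 1 : ℕ) : ℝ) * M + D) := by
        have hslope := (abs_nonneg _).trans hp
        gcongr
        exacts [hweight hbM, hweight haM]
    _ = 2 * M * (((N - 1 : ℕ) : ℝ) * M + D) := by ring

end RadialWeight

lemma Fo_sub_Fo {f : ℝ → ℝ} (hf : Continuous f) (θ t : ℝ) :
    Fo f t - Fo f θ = ∫ x in θ..t, f x :=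
  intervalIntegral.integral_interval_sub_left (hf.intervalIntegrable _ _)
    (hf.intervalIntegrable _ _)

lemma sq_sub_eq_two_mul_fluxEnergy_div {N : ℕ} {a b f u u' : ℝ → ℝ} {θ ε s : ℝ} (hs : s ≠ 0)
    (ha : a (s / ε) ≠ 0) :
    (ε * u' s) ^ 2 - 2 * b (s / ε) / a (s / ε) * ∫ t in θ..u s, f t =
      2 * fluxEnergy (radialWeight N a ε) (radialWeight N b ε) f θ u
        (fun t ↦ ε * (radialWeight N a ε t * u' t)) s / radialWeight N a ε s ^ 2 := by
  simp only [fluxEnergy, radialWeight]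
  field_simp

namespace IsSolE

variable {N : ℕ} {f e a b u u' : ℝ → ℝ} {θ₀ ε k kstar c κ M B C D s : ℝ}

-- Multiplying the equation by `s^(N-1) a(s/ε) / ε` puts it in divergence form.
lemma hasDerivAt_flux (h : IsSolE N f e a b θ₀ ε u u') (hN : 1 ≤ N) (hε : ε ≠ 0)
    (ha : DifferentiableAt ℝ a (s / ε)) (ha₀ : a (s / ε) ≠ 0) (hs : s ∈ Ioo 0 1) :
    HasDerivAt (fun t ↦ ε * (radialWeight N a ε t * u' t))
      (radialWeight N b ε s * f (u s) / ε) s := by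
  obtain ⟨-, -, -, -, hode, -⟩ := h
  obtain ⟨d, hd, heq⟩ := hode s hs
  have hs₀ : s ≠ 0 := hs.1.ne'
  have hpow : ((N - 1 : ℕ) : ℝ) * s ^ (N - 1 - 1) = ((N : ℝ) - 1) / s * s ^ (N - 1) := by
    obtain ⟨n, rfl⟩ := Nat.exists_eq_add_of_le' hN
    rw [Nat.add_sub_cancel, Nat.cast_succ, add_sub_cancel_right]
    cases n with
    | zero => simp
    | succ n => rw [Nat.add_sub_cancel, pow_succ, mul_comm (s ^ n), ← mul_assoc,
        div_mul_cancel₀ _ hs₀]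
  rw [(hasDerivAt_comp_div_const ha).deriv] at heq
  refine (((hasDerivAt_radialWeight ha).mul hd).const_mul ε).congr_deriv ?_
  rw [hpow]
  calc _ = s ^ (N - 1) * a (s / ε) / ε * (ε ^ 2 *
        (d + (((N : ℝ) - 1) / s + deriv a (s / ε) / ε / a (s / ε)) * u' s)) := by
        simp only [radialWeight]
        field_simp
        ring
    _ = radialWeight N b ε s * f (u s) / ε := by
        rw [heq, radialWeight]
        field_simp

lemma isFluxSolution (h : IsSolE N f e a b θ₀ ε u u') (hN : 1 ≤ N) (hε : 0 < ε) (hk : 0 < k)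
    (hc : 0 < c) (ha : Differentiable ℝ a) (haM : ∀ r, 0 ≤ r → a r ∈ Icc c M)
    (hbM : ∀ r, 0 ≤ r → b r ∈ Icc c M) :
    IsFluxSolution (radialWeight N a ε) (radialWeight N b ε) f (k ^ (N - 1) * c) M θ₀ ε k 1 u
      (fun t ↦ ε * (radialWeight N a ε t * u' t)) := by
  have hcpos : 0 < k ^ (N - 1) * c := mul_pos (pow_pos hk _) hc
  have hIoo : Ioo k 1 ⊆ Ioo 0 1 := Ioo_subset_Ioo_left hk.le
  have hIcc : Icc k 1 ⊆ Icc 0 1 := Icc_subset_Icc_left hk.le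
  have hdiv {s : ℝ} (hs : s ∈ Icc k 1) : 0 ≤ s / ε := div_nonneg (hIcc hs).1 hε.le
  have hp {s : ℝ} (hs : s ∈ Icc k 1) : radialWeight N a ε s ∈ Icc (k ^ (N - 1) * c) M :=
    radialWeight_mem_Icc hk.le hs hc.le (haM _ (hdiv hs))
  have ha₀ {s : ℝ} (hs : s ∈ Icc k 1) : a (s / ε) ≠ 0 := (hc.trans_le (haM _ (hdiv hs)).1).ne'
  obtain ⟨huc, hud, huc', -, -, -, -, hsign⟩ := id h
  refine ⟨hε, hcpos, fun s hs ↦ hp hs,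
    fun s hs ↦ radialWeight_mem_Icc hk.le hs hc.le (hbM _ (hdiv hs)), huc.mono hIcc, ?_,
    fun s hs ↦ ?_, fun s hs ↦ ?_, fun s hs ↦ (hsign s (hIcc hs)).1, fun s hs ↦ ?_⟩
  · have hpc : ContinuousOn (radialWeight N a ε) (Icc k 1) := fun s _ ↦
      (hasDerivAt_radialWeight (ha _)).continuousAt.continuousWithinAt
    exact continuousOn_const.mul
      (hpc.mul (huc'.mono fun s hs ↦ ⟨hk.trans_le hs.1, hs.2⟩))
  · have hu := (hud s (Ioo_subset_Ioc_self (hIoo hs))).hasDerivAt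
      (Icc_mem_nhds (hIoo hs).1 (hIoo hs).2)
    have hp₀ := (hcpos.trans_le (hp (Ioo_subset_Icc_self hs)).1).ne'
    exact hu.congr_deriv (by field_simp)
  · exact h.hasDerivAt_flux hN hε.ne' (ha _) (ha₀ (Ioo_subset_Icc_self hs)) (hIoo hs)
  · exact mul_nonneg hε.le (mul_nonneg (hcpos.le.trans (hp hs).1) (hsign s (hIcc hs)).2)

lemma flux_one_le (h : IsSolE N f e a b θ₀ ε u u') (hε : 0 < ε) (haM : a (1 / ε) ≤ M)
    (hM : 0 ≤ M) (he : e (u 1) ≤ B) : ε * (radialWeight N a ε 1 * u' 1) ≤ M * B := by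
  obtain ⟨-, -, -, -, -, -, hbc, hsign⟩ := h
  have he₀ : 0 ≤ e (u 1) := hbc ▸ mul_nonneg hε.le (hsign 1 (right_mem_Icc.2 zero_le_one)).2
  calc ε * (radialWeight N a ε 1 * u' 1) = a (1 / ε) * e (u 1) := by
        rw [radialWeight, one_pow, one_mul, mul_left_comm, hbc]
    _ ≤ M * B := mul_le_mul haM he he₀ hM

lemma exists_abs_fluxEnergy_le (hN : 1 ≤ N) (hk : kstar ∈ Ioo 0 1) (hfc : Continuous f)
    (hf : Monotone f) (hf_top : Tendsto f atTop atTop) (hfθ : 0 ≤ f θ₀)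
    (he : BddAbove (e '' Ici θ₀)) (ha : Differentiable ℝ a) (hb : Differentiable ℝ b)
    (hc : 0 < c) (haM : ∀ r, 0 ≤ r → a r ∈ Icc c M) (hbM : ∀ r, 0 ≤ r → b r ∈ Icc c M) :
    ∃ C, ∀ ε ∈ Ioc 0 (1 - kstar),
      (∀ s ∈ Ico kstar 1, |deriv a (s / ε) / ε| + |deriv b (s / ε) / ε| ≤ D) →
      ∀ u u' : ℝ → ℝ, IsSolE N f e a b θ₀ ε u u' → ∀ s ∈ Icc kstar 1,
        |fluxEnergy (radialWeight N a ε) (radialWeight N b ε) f θ₀ u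
          (fun t ↦ ε * (radialWeight N a ε t * u' t)) s| ≤ C * ε := by
  obtain ⟨B, hB⟩ := he
  have hκ : 0 < kstar ^ (N - 1) * c := mul_pos (pow_pos hk.1 _) hc
  have hM : 0 ≤ M := hc.le.trans ((haM 0 le_rfl).1.trans (haM 0 le_rfl).2)
  obtain ⟨T, hT⟩ := (hf_top.eventually_gt_atTop (M * B / (kstar ^ (N - 1) * c))).exists
  rw [div_lt_iff₀' hκ] at hT
  refine ⟨M * B * (T + M * B / (kstar ^ (N - 1) * c) - θ₀) *
    (M * (1 + M / (kstar ^ (N - 1) * c)) / (1 - kstar) +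
      2 * M * (((N - 1 : ℕ) : ℝ) * M + D) / (kstar ^ (N - 1) * c)), fun ε hε hD u u' h s hs ↦ ?_⟩
  have hflux := h.isFluxSolution hN hε.1 hk.1 hc ha haM hbM
  have hv := h.flux_one_le hε.1 (haM _ (one_div_nonneg.2 hε.1.le)).2 hM
    (hB (mem_image_of_mem e (hflux.le_u 1 (right_mem_Icc.2 hk.2.le))))
  have hK := sub_le_sub_right (hflux.u_right_le hf hfθ hε.2 hv hT) θ₀
  refine hflux.abs_fluxEnergy_le hf hfθ hfc (D := 2 * M * (((N - 1 : ℕ) : ℝ) * M + D))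
    (fun s _ ↦ (hasDerivAt_radialWeight (ha _)).differentiableAt.mul
      (hasDerivAt_radialWeight (hb _)).differentiableAt) (fun s hs ↦ ?_) hk.2 hv hK hs
  have hdiv : 0 ≤ s / ε := div_nonneg (hk.1.trans hs.1).le hε.1.le
  exact abs_deriv_mul_radialWeight_le (ha _) (hb _) ⟨(hk.1.trans hs.1).le, hs.2.le⟩
    (Icc_subset_Icc_left hc.le (haM _ hdiv)) (Icc_subset_Icc_left hc.le (hbM _ hdiv))
    (hD s (Ioo_subset_Ico_self hs))

lemma abs_sub_sqrt_le_of_abs_fluxEnergy_le (h : IsSolE N f e a b θ₀ ε u u') (hε : 0 ≤ ε)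
    (hfc : Continuous f) (hf : Monotone f) (hfθ : 0 ≤ f θ₀) (hs : s ∈ Ioc 0 1)
    (ha : 0 < a (s / ε)) (hb : 0 ≤ b (s / ε)) (hκ : 0 < κ) (hκa : κ ≤ radialWeight N a ε s)
    (hE : |fluxEnergy (radialWeight N a ε) (radialWeight N b ε) f θ₀ u
      (fun t ↦ ε * (radialWeight N a ε t * u' t)) s| ≤ C * ε) :
    |ε * u' s - √(2 * b (s / ε) / a (s / ε) * (Fo f (u s) - Fo f θ₀))| ≤
      √(2 * C / κ ^ 2) * √ε := by
  obtain ⟨hθ, hu'⟩ := h.2.2.2.2.2.2.2 s (Ioc_subset_Icc_self hs)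
  have hpot : 0 ≤ 2 * b (s / ε) / a (s / ε) * ∫ t in θ₀..u s, f t :=
    mul_nonneg (by positivity) (integral_nonneg_of_monotone hf hfθ hθ)
  have hdiff : |(ε * u' s) ^ 2 - 2 * b (s / ε) / a (s / ε) * ∫ t in θ₀..u s, f t| ≤
      2 * (C * ε) / κ ^ 2 := by
    rw [sq_sub_eq_two_mul_fluxEnergy_div (N := N) hs.1.ne' ha.ne', abs_div, abs_mul, abs_two,
      abs_sq]
    have hCε := (abs_nonneg _).trans hE
    gcongr
  calc |ε * u' s - √(2 * b (s / ε) / a (s / ε) * (Fo f (u s) - Fo f θ₀))|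
      ≤ √|(ε * u' s) ^ 2 - 2 * b (s / ε) / a (s / ε) * ∫ t in θ₀..u s, f t| := by
        rw [Fo_sub_Fo hfc]
        exact abs_sub_sqrt_le (mul_nonneg hε hu') hpot
    _ ≤ √(2 * (C * ε) / κ ^ 2) := Real.sqrt_le_sqrt hdiff
    _ = √(2 * C / κ ^ 2) * √ε := by rw [← mul_assoc, mul_div_right_comm, Real.sqrt_mul' _ hε]

end IsSolE

lemma eventually_abs_deriv_comp_div_le {a b : ℝ → ℝ} {k D : ℝ}
    (h : ∀ᶠ R in atTop, ∀ r ∈ Ico (k * R) R, R * (|deriv a r| + |deriv b r|) ≤ D) :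
    ∀ᶠ ε in nhdsWithin 0 (Ioi 0), ∀ s ∈ Ico k 1,
      |deriv a (s / ε) / ε| + |deriv b (s / ε) / ε| ≤ D := by
  filter_upwards [tendsto_inv_nhdsGT_zero.eventually h, self_mem_nhdsWithin] with ε hε hpos s hs
  have hinv : 0 < ε⁻¹ := inv_pos.2 hpos
  have hmem : s / ε ∈ Ico (k * ε⁻¹) ε⁻¹ := by
    rw [div_eq_mul_inv]
    exact ⟨mul_le_mul_of_nonneg_right hs.1 hinv.le, mul_lt_of_lt_one_left hinv hs.2⟩
  calc _ = ε⁻¹ * (|deriv a (s / ε)| + |deriv b (s / ε)|) := by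
        rw [abs_div, abs_div, abs_of_pos (mem_Ioi.1 hpos), ← add_div, div_eq_inv_mul]
    _ ≤ D := hε _ hmem

theorem stmt_17_general {N : ℕ} (hN : 1 ≤ N) {θ₀ kstar : ℝ} (hk : kstar ∈ Ioo 0 1)
    {f e a b : ℝ → ℝ} (hfc : Continuous f) (hf : Monotone f) (hf_top : Tendsto f atTop atTop)
    (hfθ : 0 ≤ f θ₀) (he : BddAbove (e '' Ici θ₀)) (ha : Differentiable ℝ a)
    (hb : Differentiable ℝ b) (hM : ∃ M, ∀ r, 0 ≤ r → a r ≤ M ∧ b r ≤ M)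
    (hc : ∃ c > 0, ∀ r, 0 ≤ r → c ≤ a r ∧ c ≤ b r)
    (hD : ∃ D, ∀ᶠ R in atTop, ∀ r ∈ Ico (kstar * R) R, R * (|deriv a r| + |deriv b r|) ≤ D) :
    ∃ εs > 0, ∃ C > 0, ∀ ε ∈ Ioo 0 εs, ∀ u u' : ℝ → ℝ,
      IsSolE N f e a b θ₀ ε u u' → ∀ s ∈ Icc kstar 1,
        |ε * u' s - √(2 * b (s / ε) / a (s / ε) * (Fo f (u s) - Fo f θ₀))| ≤ C * √ε := by
  obtain ⟨M, hM⟩ := hM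
  obtain ⟨c, hc, hcab⟩ := hc
  obtain ⟨D, hD⟩ := hD
  have haM : ∀ r, 0 ≤ r → a r ∈ Icc c M := fun r hr ↦ ⟨(hcab r hr).1, (hM r hr).1⟩
  have hbM : ∀ r, 0 ≤ r → b r ∈ Icc c M := fun r hr ↦ ⟨(hcab r hr).2, (hM r hr).2⟩
  obtain ⟨C, hC⟩ := IsSolE.exists_abs_fluxEnergy_le (D := D) hN hk hfc hf hf_top hfθ he ha hb hc
    haM hbM
  obtain ⟨εs, hεs, hsub⟩ := mem_nhdsGT_iff_exists_Ioo_subset.1 ((eventually_abs_deriv_comp_div_le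
    hD).and (Ioc_mem_nhdsGT (sub_pos.2 hk.2)))
  refine ⟨εs, hεs, √(2 * C / (kstar ^ (N - 1) * c) ^ 2) + 1, by positivity,
    fun ε hε u u' h s hs ↦ ?_⟩
  have hs₀ : 0 < s := hk.1.trans_le hs.1
  have hdiv : 0 ≤ s / ε := div_nonneg hs₀.le hε.1.le
  refine (h.abs_sub_sqrt_le_of_abs_fluxEnergy_le hε.1.le hfc hf hfθ ⟨hs₀, hs.2⟩
    (hc.trans_le (haM _ hdiv).1) (hc.le.trans (hbM _ hdiv).1) (mul_pos (pow_pos hk.1 _) hc)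
    (radialWeight_mem_Icc hk.1.le hs hc.le (haM _ hdiv)).1
    (hC ε (hsub hε).2 (hsub hε).1 u u' h s hs)).trans ?_
  gcongr
  exact le_add_of_nonneg_right zero_le_one

lemma A1.monotone {τ θ₀ : ℝ} {f : ℝ → ℝ} (hf : A1 τ θ₀ f) : Monotone f := by
  obtain ⟨hf₁, -, ⟨c, hc, hfc⟩, -⟩ := hf
  exact monotone_of_deriv_nonneg (hf₁.differentiable one_ne_zero) fun t ↦ hc.le.trans (hfc t)

lemma A1.tendsto_atTop {τ θ₀ : ℝ} {f : ℝ → ℝ} (hf : A1 τ θ₀ f) : Tendsto f atTop atTop := by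
  obtain ⟨hf₁, -, ⟨c, hc, hfc⟩, -⟩ := hf
  have hlin : Tendsto (fun t ↦ f 0 + c * t) atTop atTop :=
    tendsto_atTop_add_const_left _ _ (tendsto_id.const_mul_atTop hc)
  refine tendsto_atTop_mono' _ ?_ hlin
  filter_upwards [eventually_ge_atTop 0] with t ht
  have := mul_sub_le_image_sub_of_le_deriv (hf₁.differentiable one_ne_zero) hfc ht
  rw [sub_zero] at this
  linarith

lemma A2.bddAbove_image_Ici {τ : ℝ} {e : ℝ → ℝ} (he : A2 τ e) (θ : ℝ) :
    BddAbove (e '' Ici θ) :=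
  ⟨e θ, forall_mem_image.2 fun _ ht ↦ he.2.2.1 ht⟩

lemma A3.exists_eventually_deriv_le {N : ℕ} {τ k : ℝ} {a b : ℝ → ℝ} (h : A3 N τ k a b) :
    ∃ D, ∀ᶠ R in atTop, ∀ r ∈ Ico (k * R) R, R * (|deriv a r| + |deriv b r|) ≤ D := by
  obtain ⟨ha, hb, -, -, -, -, -, -, L, -, hlim⟩ := h
  have ha₁ : Continuous (deriv a) := ha.continuous_deriv one_le_two
  have hb₁ : Continuous (deriv b) := hb.continuous_deriv le_rfl
  have ha₂ : Continuous (deriv (deriv a)) :=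
    (contDiff_succ_iff_deriv.1 ha).2.2.continuous_deriv le_rfl
  refine ⟨L + 1, (hlim.eventually_lt_const (lt_add_one L)).mono fun R hR r hr ↦ ?_⟩
  have hbdd : BddAbove ((fun r ↦ R * (|deriv a r| + |deriv b r|) + R ^ 2 * |deriv (deriv a) r|) ''
      Ico (k * R) R) :=
    (isCompact_Icc.bddAbove_image (((ha₁.abs.add hb₁.abs).const_mul R).add
      (ha₂.abs.const_mul _)).continuousOn).mono (image_mono Ico_subset_Icc_self)
  calc R * (|deriv a r| + |deriv b r|)
      ≤ R * (|deriv a r| + |deriv b r|) + R ^ 2 * |deriv (deriv a) r| :=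
        le_add_of_nonneg_right (by positivity)
    _ ≤ L + 1 := (le_csSup hbdd (mem_image_of_mem _ hr)).trans hR.le

/-- the first-order asymptotic ODE estimate
`|ε u_ε'(s) − √((2β_ε(s)/α_ε(s))(F(u_ε(s)) − F(θ₀)))| ≤ C̃ √ε` on `[k*, 1]`. -/
theorem stmt_17 (N : ℕ) (hN : 2 ≤ N) (τ θ₀ kstar : ℝ) (hτ : τ ∈ Set.Ioo (0:ℝ) 1)
    (f e a b : ℝ → ℝ) (hf : A1 τ θ₀ f) (he : A2 τ e) (hab : A3 N τ kstar a b) :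
    ∃ εs > 0, ∃ C > 0, ∀ ε : ℝ, ε ∈ Set.Ioo 0 εs → ∀ u u' : ℝ → ℝ,
      IsSolE N f e a b θ₀ ε u u' → ∀ s ∈ Set.Icc kstar 1,
        |ε * u' s - Real.sqrt (2 * b (s / ε) / a (s / ε) * (Fo f (u s) - Fo f θ₀))| ≤
          C * Real.sqrt ε := by
  exact stmt_17_general (one_le_two.trans hN) hab.2.2.2.2.2.2.2.1 hf.1.continuous hf.monotone
    hf.tendsto_atTop hf.2.2.2.ge (he.bddAbove_image_Ici θ₀) (hab.1.differentiable two_ne_zero)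
    (hab.2.1.differentiable one_ne_zero) hab.2.2.2.2.1 hab.2.2.2.2.2.1
    hab.exists_eventually_deriv_le
end
end

section
/- Assume lim_{ε↓0} β_ε(1)/α_ε(1) = μ₀ for some constant μ₀ > 0. Then lim_{ε↓0} [ ε ∫_{k*}^{1} ((N−1)/s + α_ε'(s)/α_ε(s)) (u_ε'(s))² ds − √μ₀ ( (N−1) + α_ε'(1)/α_ε(1) ) ∫_{θ₀}^{p₀} √(2 (F(t) − F(θ₀))) dt ] = 0. -/
open Filter Set MeasureTheory

noncomputable section

/-!
Write `g` for the damping coefficient, `m` for the reaction strength, and `G(t) = F(t) - F(θ)`.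
On `[k, l]`, away from the origin, both coefficients are Lipschitz uniformly in `ε`, so only the
layer of width `O(ε)` at `l` is seen. That width comes from integrating
`c κ (u - θ) ≤ m f(u) = ε² (u'' + g u')`, which gives `∫ (u - θ) = O(ε)`, and hence, by parts,
`∫ (l - s) u'(s) ds = O(ε)`.

Multiplying the equation by `u'` shows that the energy `(ε u')² / 2 - μ G(u)` is nearly conserved
once `m` is frozen at its boundary limit `μ`: the error of freezing is controlled by
`∫ (l - s) u'`. As the energy vanishes at `k` in the limit, `ε u' ≈ √(2 μ G(u))` uniformly. At `l`
this turns the boundary condition into `e(u(l)) ≈ √(2 μ G(u(l)))`, whose two sides are oppositely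
monotone, so `u(l) → p`. Finally `ε ∫ u'² ≈ ∫ √(2 μ G(u)) u' ds` is a change of variables, and the
weight `g` may be frozen at `g(l)` for the same reason that `m` may.
-/

open scoped Topology

section Calculus

theorem le_exp_mul_of_neg_mul_le_deriv {k l K s : ℝ} {v v' : ℝ → ℝ}
    (hv : ContinuousOn v (Icc k l)) (hv' : ∀ x ∈ Ioo k l, HasDerivAt v (v' x) x)
    (hle : ∀ x ∈ Ioo k l, -(K * v x) ≤ v' x) (hs : s ∈ Icc k l) :
    v s ≤ Real.exp (K * (l - s)) * v l := by
  have hexp (x : ℝ) : HasDerivAt (fun x => Real.exp (K * (x - s)))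
      (Real.exp (K * (x - s)) * K) x := by
    simpa using (((hasDerivAt_id x).sub_const s).const_mul K).exp
  have hmono : MonotoneOn (fun x => Real.exp (K * (x - s)) * v x) (Icc k l) := by
    refine monotoneOn_of_hasDerivWithinAt_nonneg (convex_Icc k l)
      ((by fun_prop : Continuous fun x => Real.exp (K * (x - s))).continuousOn.mul hv)
      (f' := fun x => Real.exp (K * (x - s)) * (K * v x + v' x)) ?_ ?_ <;> rw [interior_Icc]
    · exact fun x hx => (((hexp x).mul (hv' x hx)).congr_deriv (by ring)).hasDerivWithinAt
    · exact fun x hx => mul_nonneg (Real.exp_pos _).le (by linarith [hle x hx])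
  simpa using hmono hs (right_mem_Icc.2 (hs.1.trans hs.2)) hs.2

theorem sub_mul_le_integral_of_monotoneOn {k l s : ℝ} {w : ℝ → ℝ} (hw : MonotoneOn w (Icc k l))
    (hw0 : ∀ x ∈ Icc k l, 0 ≤ w x) (hs : s ∈ Icc k l) : (l - s) * w s ≤ ∫ x in k..l, w x := by
  have hint : IntervalIntegrable w volume k l :=
    MonotoneOn.intervalIntegrable (by rwa [uIcc_of_le (hs.1.trans hs.2)])
  have hint' : IntervalIntegrable w volume s l :=
    hint.mono_set (by
      rw [uIcc_of_le hs.2, uIcc_of_le (hs.1.trans hs.2)]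
      exact Icc_subset_Icc_left hs.1)
  calc (l - s) * w s = ∫ _ in s..l, w s := by simp
    _ ≤ ∫ x in s..l, w x := intervalIntegral.integral_mono_on hs.2 (by simp) hint'
        fun x hx => hw hs ⟨hs.1.trans hx.1, hx.2⟩ hx.1
    _ ≤ ∫ x in k..l, w x := intervalIntegral.integral_mono_interval hs.1 hs.2 le_rfl
        ((ae_restrict_mem measurableSet_Ioc).mono fun x hx => hw0 x (Ioc_subset_Icc_self hx)) hint

theorem abs_sub_left_le_integral_of_abs_deriv_le {k l s : ℝ} {E E' B : ℝ → ℝ}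
    (hE : ContinuousOn E (Icc k l)) (hE' : ∀ x ∈ Ioo k l, HasDerivAt E (E' x) x)
    (hB : ContinuousOn B (Icc k l)) (hle : ∀ x ∈ Icc k l, |E' x| ≤ B x) (hs : s ∈ Icc k l) :
    |E s - E k| ≤ ∫ x in k..l, B x := by
  have hsub : Icc k s ⊆ Icc k l := Icc_subset_Icc_right hs.2
  have hderiv : ∀ x ∈ Ioo k s, HasDerivAt E (E' x) x := fun x hx => hE' x ⟨hx.1, hx.2.trans_le hs.2⟩
  calc |E s - E k| ≤ ∫ x in k..s, B x := by
        refine norm_sub_le_integral_of_norm_deriv_le_of_le hs.1 (hE.mono hsub)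
          (fun x hx => (hderiv x hx).differentiableAt.differentiableWithinAt)
          (ae_of_all _ fun x hx => ?_) ((hB.mono hsub).intervalIntegrable_of_Icc hs.1)
        rw [(hderiv x hx).deriv]
        exact hle x (hsub (Ioo_subset_Icc_self hx))
    _ ≤ ∫ x in k..l, B x := intervalIntegral.integral_mono_interval le_rfl hs.1 hs.2
        ((ae_restrict_mem measurableSet_Ioc).mono fun x hx =>
          (abs_nonneg _).trans (hle x (Ioc_subset_Icc_self hx)))
        (hB.intervalIntegrable_of_Icc (hs.1.trans hs.2))

theorem tendsto_intervalIntegral_of_tendsto {ι : Type*} {F : Filter ι} {φ : ℝ → ℝ}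
    (hφ : Continuous φ) {x y : ι → ℝ} {p q : ℝ} (hx : Tendsto x F (𝓝 p)) (hy : Tendsto y F (𝓝 q)) :
    Tendsto (fun i => ∫ t in x i..y i, φ t) F (𝓝 (∫ t in p..q, φ t)) := by
  have hprimitive : Continuous fun z => ∫ t in p..z, φ t :=
    intervalIntegral.continuous_primitive (fun _ _ => hφ.intervalIntegrable _ _) p
  have hlim := ((hprimitive.tendsto q).comp hy).sub ((hprimitive.tendsto p).comp hx)
  rw [intervalIntegral.integral_same, sub_zero] at hlim
  exact hlim.congr fun i => intervalIntegral.integral_interval_sub_left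
    (hφ.intervalIntegrable _ _) (hφ.intervalIntegrable _ _)

theorem abs_sub_le_sqrt_of_abs_sq_sub_sq_le {x y η : ℝ} (hx : 0 ≤ x) (hy : 0 ≤ y)
    (h : |x ^ 2 - y ^ 2| ≤ η) : |x - y| ≤ √η := by
  have hle : |x - y| ≤ |x + y| := by
    rw [abs_of_nonneg (add_nonneg hx hy), abs_le]
    constructor <;> linarith
  refine Real.le_sqrt_of_sq_le (le_trans ?_ h)
  calc |x - y| ^ 2 = |x - y| * |x - y| := sq _
    _ ≤ |x - y| * |x + y| := mul_le_mul_of_nonneg_left hle (abs_nonneg _)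
    _ = |x ^ 2 - y ^ 2| := by rw [← abs_mul]; ring_nf

theorem tendsto_of_tendsto_comp_of_strictAntiOn {ι α β : Type*} [LinearOrder α]
    [TopologicalSpace α] [OrderTopology α] [LinearOrder β] [TopologicalSpace β]
    [OrderClosedTopology β] {F : Filter ι} {s : Set α} [s.OrdConnected] {h : α → β} {x : ι → α}
    {p : α} (hh : StrictAntiOn h s) (hp : p ∈ s) (hx : ∀ᶠ i in F, x i ∈ s)
    (hlim : Tendsto (fun i => h (x i)) F (𝓝 (h p))) : Tendsto x F (𝓝 p) := by
  refine tendsto_order.2 ⟨fun q hq => ?_, fun q hq => ?_⟩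
  · by_cases hqs : q ∈ s
    · filter_upwards [hx, hlim.eventually_lt_const (hh hqs hp hq)] with i hi hlt
      exact (hh.lt_iff_gt hi hqs).1 hlt
    · filter_upwards [hx] with i hi
      exact lt_of_not_ge fun hiq => hqs (Set.OrdConnected.out ‹_› hi hp ⟨hiq, hq.le⟩)
  · by_cases hqs : q ∈ s
    · filter_upwards [hx, hlim.eventually_const_lt (hh hp hqs hq)] with i hi hlt
      exact (hh.lt_iff_gt hqs hi).1 hlt
    · filter_upwards [hx] with i hi
      exact lt_of_not_ge fun hiq => hqs (Set.OrdConnected.out ‹_› hp hi ⟨hq.le, hiq⟩)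

theorem hasDerivAt_comp_div_s18 {φ : ℝ → ℝ} {φ' ε s : ℝ} (hφ : HasDerivAt φ φ' (s / ε)) :
    HasDerivAt (fun t => φ (t / ε)) (φ' / ε) s :=
  (hφ.comp s ((hasDerivAt_id s).div_const ε)).congr_deriv (mul_one_div _ _)

theorem abs_sub_right_le_of_abs_deriv_le {k l s C : ℝ} {φ φ' : ℝ → ℝ}
    (hφ : ∀ x ∈ Icc k l, HasDerivAt φ (φ' x) x) (hC : ∀ x ∈ Icc k l, |φ' x| ≤ C)
    (hs : s ∈ Icc k l) : |φ s - φ l| ≤ C * (l - s) := by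
  have hle := Convex.norm_image_sub_le_of_norm_hasDerivWithin_le
    (fun x hx => (hφ x hx).hasDerivWithinAt) hC (convex_Icc k l) hs
    (right_mem_Icc.2 (hs.1.trans hs.2))
  rwa [norm_sub_rev, Real.norm_eq_abs, Real.norm_of_nonneg (sub_nonneg.2 hs.2)] at hle

theorem abs_div_sub_div_le {x x' y y' c M δ : ℝ} (hc : 0 < c) (hy : c ≤ y) (hy' : c ≤ y')
    (hx' : |x'| ≤ M) (hxx : |x - x'| ≤ δ) (hyy : |y - y'| ≤ δ) :
    |x / y - x' / y'| ≤ (1 / c + M / c ^ 2) * δ := by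
  have hy0 : 0 < y := hc.trans_le hy
  have hy0' : 0 < y' := hc.trans_le hy'
  have hsplit : x / y - x' / y' = (x - x') / y + x' * (y' - y) / (y * y') := by
    field_simp
    ring
  have hnum : |(x - x') / y| ≤ δ / c := by
    rw [abs_div, abs_of_pos hy0]
    exact div_le_div₀ ((abs_nonneg _).trans hxx) hxx hc hy
  have hden : |x' * (y' - y) / (y * y')| ≤ M * δ / c ^ 2 := by
    rw [abs_div, abs_mul, abs_sub_comm y', abs_of_pos (mul_pos hy0 hy0'), sq]
    have hM : 0 ≤ M := (abs_nonneg _).trans hx'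
    have hδ : 0 ≤ δ := (abs_nonneg _).trans hxx
    gcongr
  calc |x / y - x' / y'| ≤ δ / c + M * δ / c ^ 2 := by
        rw [hsplit]
        exact (abs_add_le _ _).trans (add_le_add hnum hden)
    _ = (1 / c + M / c ^ 2) * δ := by ring

theorem eventually_forall_Icc_le_of_tendsto_sSup {φ : ℝ → ℝ → ℝ} {k L C : ℝ}
    (hφ : ∀ R, Continuous (φ R)) (hk : k < 1) (hLC : L < C)
    (hlim : Tendsto (fun R => sSup (φ R '' Ico (k * R) R)) atTop (𝓝 L)) :
    ∀ᶠ R in atTop, ∀ r ∈ Icc (k * R) R, φ R r ≤ C := by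
  filter_upwards [hlim.eventually_le_const hLC, eventually_gt_atTop 0] with R hR hR0
  have hbdd : BddAbove (φ R '' Ico (k * R) R) :=
    (isCompact_Icc.image (hφ R)).bddAbove.mono (image_mono Ico_subset_Icc_self)
  have hIco : Ico (k * R) R ⊆ {r | φ R r ≤ C} := fun r hr =>
    (le_csSup hbdd (mem_image_of_mem _ hr)).trans hR
  have hne : k * R ≠ R := by nlinarith
  rw [← closure_Ico hne]
  exact closure_minimal hIco (isClosed_le (hφ R) continuous_const)

end Calculus

section Potential

/-- The potential `G(t) = F(t) − F(θ) = ∫_θ^t f` of the reaction term, normalised to vanish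
at `θ`. -/
def potential (f : ℝ → ℝ) (θ t : ℝ) : ℝ := Fo f t - Fo f θ

/-- A continuous reaction term vanishing at `θ` and growing there at rate at least `κ > 0`.
Monotonicity of `t ↦ f t - κ t` replaces the bound `κ ≤ f'`. -/
structure IsRestoring (f : ℝ → ℝ) (θ κ : ℝ) : Prop where
  continuous : Continuous f
  map_rest : f θ = 0
  rate_pos : 0 < κ
  monotoneOn_sub : MonotoneOn (fun t => f t - κ * t) (Ici θ)

variable {f : ℝ → ℝ} {θ κ t : ℝ}

theorem hasDerivAt_potential (hf : Continuous f) (θ t : ℝ) :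
    HasDerivAt (potential f θ) (f t) t :=
  (hf.integral_hasStrictDerivAt 0 t).hasDerivAt.sub_const _

theorem continuous_potential (hf : Continuous f) (θ : ℝ) : Continuous (potential f θ) :=
  continuous_iff_continuousAt.2 fun t => (hasDerivAt_potential hf θ t).continuousAt

theorem potential_self (f : ℝ → ℝ) (θ : ℝ) : potential f θ θ = 0 := sub_self _

namespace IsRestoring

theorem mul_sub_le (hf : IsRestoring f θ κ) (ht : θ ≤ t) : κ * (t - θ) ≤ f t := by
  have := hf.monotoneOn_sub self_mem_Ici ht ht
  simp only [hf.map_rest] at this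
  linarith

theorem monotoneOn (hf : IsRestoring f θ κ) : MonotoneOn f (Ici θ) := fun x hx y hy hxy => by
  have := hf.monotoneOn_sub hx hy hxy
  nlinarith [mul_le_mul_of_nonneg_left hxy hf.rate_pos.le]

theorem nonneg (hf : IsRestoring f θ κ) (ht : θ ≤ t) : 0 ≤ f t :=
  (mul_nonneg hf.rate_pos.le (sub_nonneg.2 ht)).trans (hf.mul_sub_le ht)

theorem strictMonoOn_potential (hf : IsRestoring f θ κ) :
    StrictMonoOn (potential f θ) (Ici θ) := by
  refine strictMonoOn_of_deriv_pos (convex_Ici θ)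
    (continuous_potential hf.continuous θ).continuousOn fun t ht => ?_
  rw [interior_Ici, mem_Ioi] at ht
  rw [(hasDerivAt_potential hf.continuous θ t).deriv]
  exact (mul_pos hf.rate_pos (sub_pos.2 ht)).trans_le (hf.mul_sub_le ht.le)

theorem potential_nonneg (hf : IsRestoring f θ κ) (ht : θ ≤ t) : 0 ≤ potential f θ t := by
  simpa only [potential_self] using hf.strictMonoOn_potential.monotoneOn self_mem_Ici ht ht

end IsRestoring

end Potential

section Layer

/-- Coefficients `g` (damping) and `m` (reaction strength) on `[k, l]`: `g` is bounded by `K`, `m`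
is at least `c > 0`, and both vary from their values at the right endpoint at rate at most `K`. -/
structure IsLayerCoeff (k l K c : ℝ) (g m : ℝ → ℝ) : Prop where
  lower_pos : 0 < c
  continuousOn_damping : ContinuousOn g (Icc k l)
  continuousOn_strength : ContinuousOn m (Icc k l)
  abs_damping_le : ∀ s ∈ Icc k l, |g s| ≤ K
  le_strength : ∀ s ∈ Icc k l, c ≤ m s
  abs_damping_sub_le : ∀ s ∈ Icc k l, |g s - g l| ≤ K * (l - s)
  abs_strength_sub_le : ∀ s ∈ Icc k l, |m s - m l| ≤ K * (l - s)

/-- `u`, with derivative `u'`, is a nondecreasing solution of `ε² (u'' + g u') = m f(u)` on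
`(k, l)` with `u ≥ θ`. The equation is solved for `u''`, so it only means this for `ε ≠ 0`. -/
structure IsLayerSol (k l θ ε : ℝ) (f g m u u' : ℝ → ℝ) : Prop where
  continuousOn : ContinuousOn u (Icc k l)
  continuousOn_deriv : ContinuousOn u' (Icc k l)
  hasDerivAt : ∀ s ∈ Ioo k l, HasDerivAt u (u' s) s
  hasDerivAt_deriv : ∀ s ∈ Ioo k l, HasDerivAt u' (m s * f (u s) / ε ^ 2 - g s * u' s) s
  deriv_nonneg : ∀ s ∈ Icc k l, 0 ≤ u' s
  rest_le : ∀ s ∈ Icc k l, θ ≤ u s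

/-- The energy `(ε u')² / 2 - μ G(u)` of a layer solution, with reaction strength frozen at `μ`. -/
def layerEnergy (f : ℝ → ℝ) (θ μ ε : ℝ) (u u' : ℝ → ℝ) (s : ℝ) : ℝ :=
  (ε * u' s) ^ 2 / 2 - μ * potential f θ (u s)

variable {k l θ κ ε K c V s t : ℝ} {f g m u u' : ℝ → ℝ}

theorem IsLayerCoeff.bound_nonneg (hgm : IsLayerCoeff k l K c g m) (hkl : k ≤ l) : 0 ≤ K :=
  (abs_nonneg _).trans (hgm.abs_damping_le l (right_mem_Icc.2 hkl))

namespace IsLayerSol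

theorem continuousOn_comp (h : IsLayerSol k l θ ε f g m u u') {φ : ℝ → ℝ} (hφ : Continuous φ) :
    ContinuousOn (fun s => φ (u s)) (Icc k l) :=
  hφ.comp_continuousOn h.continuousOn

theorem monotoneOn (h : IsLayerSol k l θ ε f g m u u') : MonotoneOn u (Icc k l) := by
  refine monotoneOn_of_hasDerivWithinAt_nonneg (f' := u') (convex_Icc k l) h.continuousOn ?_ ?_ <;>
    rw [interior_Icc]
  · exact fun x hx => (h.hasDerivAt x hx).hasDerivWithinAt
  · exact fun x hx => h.deriv_nonneg x (Ioo_subset_Icc_self hx)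

theorem integral_deriv (h : IsLayerSol k l θ ε f g m u u') (hkl : k ≤ l) :
    ∫ s in k..l, u' s = u l - u k :=
  intervalIntegral.integral_eq_sub_of_hasDerivAt_of_le hkl h.continuousOn h.hasDerivAt
    (h.continuousOn_deriv.intervalIntegrable_of_Icc hkl)

theorem deriv_le_exp_mul_deriv (h : IsLayerSol k l θ ε f g m u u') (hf : IsRestoring f θ κ)
    (hgm : IsLayerCoeff k l K c g m) (hs : s ∈ Icc k l) (ht : t ∈ Icc k l) (hst : s ≤ t) :
    u' s ≤ Real.exp (K * (t - s)) * u' t := by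
  have hsub : Icc s t ⊆ Icc k l := Icc_subset_Icc hs.1 ht.2
  refine le_exp_mul_of_neg_mul_le_deriv (h.continuousOn_deriv.mono hsub)
    (fun x hx => h.hasDerivAt_deriv x ⟨hs.1.trans_lt hx.1, hx.2.trans_le ht.2⟩)
    (fun x hx => ?_) (left_mem_Icc.2 hst)
  have hx := hsub (Ioo_subset_Icc_self hx)
  have hreaction : 0 ≤ m x * f (u x) / ε ^ 2 :=
    div_nonneg (mul_nonneg (hgm.lower_pos.le.trans (hgm.le_strength x hx))
      (hf.nonneg (h.rest_le x hx))) (sq_nonneg ε)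
  have hdamping : g x * u' x ≤ K * u' x :=
    mul_le_mul_of_nonneg_right ((le_abs_self _).trans (hgm.abs_damping_le x hx))
      (h.deriv_nonneg x hx)
  linarith

theorem scaled_deriv_le (h : IsLayerSol k l θ ε f g m u u') (hf : IsRestoring f θ κ)
    (hgm : IsLayerCoeff k l K c g m) (hε : 0 ≤ ε) (hs : s ∈ Icc k l) :
    ε * u' s ≤ Real.exp (K * (l - k)) * (ε * u' l) := by
  have hkl : k ≤ l := hs.1.trans hs.2
  have hl : l ∈ Icc k l := right_mem_Icc.2 hkl
  calc ε * u' s ≤ ε * (Real.exp (K * (l - s)) * u' l) :=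
        mul_le_mul_of_nonneg_left (h.deriv_le_exp_mul_deriv hf hgm hs hl hs.2) hε
    _ ≤ ε * (Real.exp (K * (l - k)) * u' l) := by
        have := h.deriv_nonneg l hl
        have := hgm.bound_nonneg hkl
        gcongr
        exact hs.1
    _ = Real.exp (K * (l - k)) * (ε * u' l) := by ring

theorem mul_deriv_left_le (h : IsLayerSol k l θ ε f g m u u') (hf : IsRestoring f θ κ)
    (hgm : IsLayerCoeff k l K c g m) (hkl : k < l) :
    (l - k) * u' k ≤ Real.exp (K * (l - k)) * (u l - u k) := by
  obtain ⟨ξ, hξ, hslope⟩ := exists_hasDerivAt_eq_slope u u' hkl h.continuousOn h.hasDerivAt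
  rw [eq_div_iff (sub_pos.2 hkl).ne'] at hslope
  have hξ' := Ioo_subset_Icc_self hξ
  have := h.deriv_nonneg ξ hξ'
  have := hgm.bound_nonneg hkl.le
  have := (sub_pos.2 hkl).le
  calc (l - k) * u' k ≤ (l - k) * (Real.exp (K * (ξ - k)) * u' ξ) := by
        gcongr
        exact h.deriv_le_exp_mul_deriv hf hgm (left_mem_Icc.2 hkl.le) hξ' hξ.1.le
    _ ≤ (l - k) * (Real.exp (K * (l - k)) * u' ξ) := by
        gcongr
        exact hξ.2.le
    _ = Real.exp (K * (l - k)) * (u l - u k) := by rw [← hslope]; ring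

theorem mul_sub_le_sq_mul_deriv_deriv_add (h : IsLayerSol k l θ ε f g m u u')
    (hf : IsRestoring f θ κ) (hgm : IsLayerCoeff k l K c g m) (hε : 0 < ε)
    (hV : ∀ s ∈ Icc k l, ε * u' s ≤ V) (hs : s ∈ Icc k l) :
    c * κ * (u s - θ) ≤ ε ^ 2 * (m s * f (u s) / ε ^ 2 - g s * u' s) + ε * (K * V) := by
  have hreaction : c * (κ * (u s - θ)) ≤ m s * f (u s) :=
    mul_le_mul (hgm.le_strength s hs) (hf.mul_sub_le (h.rest_le s hs))
      (mul_nonneg hf.rate_pos.le (sub_nonneg.2 (h.rest_le s hs)))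
      (hgm.lower_pos.le.trans (hgm.le_strength s hs))
  have hdamping : g s * (ε * u' s) ≤ K * V :=
    mul_le_mul ((le_abs_self _).trans (hgm.abs_damping_le s hs)) (hV s hs)
      (mul_nonneg hε.le (h.deriv_nonneg s hs)) (hgm.bound_nonneg (hs.1.trans hs.2))
  calc c * κ * (u s - θ) ≤ m s * f (u s) := by rwa [mul_assoc]
    _ ≤ m s * f (u s) + ε * (K * V - g s * (ε * u' s)) :=
        le_add_of_nonneg_right (mul_nonneg hε.le (sub_nonneg.2 hdamping))
    _ = _ := by
        field_simp
        ring

theorem integral_sub_le (h : IsLayerSol k l θ ε f g m u u') (hf : IsRestoring f θ κ)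
    (hgm : IsLayerCoeff k l K c g m) (hkl : k ≤ l) (hε : 0 < ε)
    (hV : ∀ s ∈ Icc k l, ε * u' s ≤ V) :
    c * κ * ∫ s in k..l, (u s - θ) ≤ V * (1 + K * (l - k)) * ε := by
  set w : ℝ → ℝ := fun s => m s * f (u s) / ε ^ 2 - g s * u' s
  have hw : IntervalIntegrable w volume k l := ContinuousOn.intervalIntegrable_of_Icc hkl <|
    ((hgm.continuousOn_strength.mul (h.continuousOn_comp hf.continuous)).div_const _).sub
      (hgm.continuousOn_damping.mul h.continuousOn_deriv)
  have hwint : ∫ s in k..l, w s = u' l - u' k :=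
    intervalIntegral.integral_eq_sub_of_hasDerivAt_of_le hkl h.continuousOn_deriv
      h.hasDerivAt_deriv hw
  calc c * κ * ∫ s in k..l, (u s - θ) = ∫ s in k..l, c * κ * (u s - θ) := by
        rw [intervalIntegral.integral_const_mul]
    _ ≤ ∫ s in k..l, (ε ^ 2 * w s + ε * (K * V)) :=
        intervalIntegral.integral_mono_on hkl
          (((h.continuousOn.sub continuousOn_const).intervalIntegrable_of_Icc hkl).const_mul _)
          ((hw.const_mul _).add intervalIntegrable_const)
          fun s hs => h.mul_sub_le_sq_mul_deriv_deriv_add hf hgm hε hV hs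
    _ = ε * (ε * u' l - ε * u' k) + (l - k) * (ε * (K * V)) := by
        rw [intervalIntegral.integral_add (hw.const_mul _) intervalIntegrable_const,
          intervalIntegral.integral_const_mul, hwint, intervalIntegral.integral_const, smul_eq_mul]
        ring
    _ ≤ V * (1 + K * (l - k)) * ε := by
        nlinarith [hV l (right_mem_Icc.2 hkl),
          mul_nonneg hε.le (h.deriv_nonneg k (left_mem_Icc.2 hkl))]

theorem integral_sub_mul_deriv_le (h : IsLayerSol k l θ ε f g m u u') (hkl : k ≤ l) :
    ∫ s in k..l, (l - s) * u' s ≤ ∫ s in k..l, (u s - θ) := by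
  have hparts := intervalIntegral.integral_mul_deriv_eq_deriv_mul_of_hasDerivAt
    (a := k) (b := l) (u := fun s => l - s) (v := fun s => u s - θ) (u' := fun _ => -1) (v' := u')
    (by fun_prop) (by rw [uIcc_of_le hkl]; exact h.continuousOn.sub continuousOn_const)
    (fun s _ => by simpa using (hasDerivAt_id s).const_sub l)
    (fun s hs => by
      rw [min_eq_left hkl, max_eq_right hkl] at hs
      exact (h.hasDerivAt s hs).sub_const θ)
    (by simp) (h.continuousOn_deriv.intervalIntegrable_of_Icc hkl)
  have hk := mul_nonneg (sub_nonneg.2 hkl) (sub_nonneg.2 (h.rest_le k (left_mem_Icc.2 hkl)))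
  simp only [neg_one_mul, intervalIntegral.integral_neg, sub_self, zero_mul] at hparts
  linarith

theorem right_le_of_integral_sub_le {A : ℝ} (h : IsLayerSol k l θ ε f g m u u') (hε : 0 < ε)
    (hεkl : ε ≤ l - k) (hV : ∀ s ∈ Icc k l, ε * u' s ≤ V)
    (hA : ∫ s in k..l, (u s - θ) ≤ A * ε) : u l ≤ θ + A + V := by
  have hmem : l - ε ∈ Icc k l := ⟨by linarith, by linarith⟩
  have hinner : ε * (u (l - ε) - θ) ≤ A * ε := by
    refine le_trans ?_ hA
    simpa using sub_mul_le_integral_of_monotoneOn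
      (fun x hx y hy hxy => sub_le_sub_right (h.monotoneOn hx hy hxy) θ)
      (fun x hx => sub_nonneg.2 (h.rest_le x hx)) hmem
  obtain ⟨ξ, hξ, hslope⟩ := exists_hasDerivAt_eq_slope u u' (by linarith : l - ε < l)
    (h.continuousOn.mono (Icc_subset_Icc_left hmem.1))
    fun x hx => h.hasDerivAt x ⟨hmem.1.trans_lt hx.1, hx.2⟩
  have hlayer : u l - u (l - ε) ≤ V := by
    rw [sub_sub_cancel, eq_div_iff hε.ne', mul_comm] at hslope
    exact hslope ▸ hV ξ ⟨hmem.1.trans hξ.1.le, hξ.2.le⟩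
  nlinarith

theorem abs_integral_damping_sub_le (h : IsLayerSol k l θ ε f g m u u')
    (hgm : IsLayerCoeff k l K c g m) (hkl : k ≤ l) (hε : 0 ≤ ε)
    (hV : ∀ s ∈ Icc k l, ε * u' s ≤ V) :
    |ε * (∫ s in k..l, g s * u' s ^ 2) - g l * (ε * ∫ s in k..l, u' s ^ 2)| ≤
      K * V * ∫ s in k..l, (u s - θ) := by
  have hsq : IntervalIntegrable (fun s => u' s ^ 2) volume k l :=
    (h.continuousOn_deriv.pow 2).intervalIntegrable_of_Icc hkl
  have hgsq : IntervalIntegrable (fun s => g s * u' s ^ 2) volume k l :=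
    (hgm.continuousOn_damping.mul (h.continuousOn_deriv.pow 2)).intervalIntegrable_of_Icc hkl
  have hweight : IntervalIntegrable (fun s => K * V * ((l - s) * u' s)) volume k l :=
    (ContinuousOn.mul continuousOn_const ((by fun_prop : ContinuousOn (fun s => l - s) _).mul
      h.continuousOn_deriv)).intervalIntegrable_of_Icc hkl
  have hV0 : 0 ≤ V := (mul_nonneg hε (h.deriv_nonneg l (right_mem_Icc.2 hkl))).trans
    (hV l (right_mem_Icc.2 hkl))
  have hpointwise : ∀ s ∈ Icc k l,
      ‖ε * ((g s - g l) * u' s ^ 2)‖ ≤ K * V * ((l - s) * u' s) := fun s hs => by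
    have hu := h.deriv_nonneg s hs
    calc ‖ε * ((g s - g l) * u' s ^ 2)‖ = |g s - g l| * (ε * u' s) * u' s := by
          rw [Real.norm_eq_abs, abs_mul, abs_mul, abs_of_nonneg hε,
            abs_of_nonneg (sq_nonneg (u' s))]
          ring
      _ ≤ K * (l - s) * V * u' s := by
          gcongr
          exacts [(abs_nonneg _).trans (hgm.abs_damping_sub_le s hs),
            hgm.abs_damping_sub_le s hs, hV s hs]
      _ = K * V * ((l - s) * u' s) := by ring
  calc |ε * (∫ s in k..l, g s * u' s ^ 2) - g l * (ε * ∫ s in k..l, u' s ^ 2)|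
      = ‖∫ s in k..l, ε * ((g s - g l) * u' s ^ 2)‖ := by
        simp_rw [sub_mul]
        rw [intervalIntegral.integral_const_mul,
          intervalIntegral.integral_sub hgsq (hsq.const_mul _),
          intervalIntegral.integral_const_mul, Real.norm_eq_abs]
        ring_nf
    _ ≤ ∫ s in k..l, K * V * ((l - s) * u' s) :=
        intervalIntegral.norm_integral_le_of_norm_le hkl
          (ae_of_all _ fun s hs => hpointwise s (Ioc_subset_Icc_self hs)) hweight
    _ ≤ K * V * ∫ s in k..l, (u s - θ) := by
        rw [intervalIntegral.integral_const_mul]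
        exact mul_le_mul_of_nonneg_left (h.integral_sub_mul_deriv_le hkl)
          (mul_nonneg (hgm.bound_nonneg hkl) hV0)

theorem integral_sqrt_potential_comp_mul_deriv (h : IsLayerSol k l θ ε f g m u u')
    (hf : Continuous f) (hkl : k ≤ l) (μ : ℝ) :
    ∫ s in k..l, √(2 * μ * potential f θ (u s)) * u' s =
      ∫ t in u k..u l, √(2 * μ * potential f θ t) := by
  have hG : Continuous fun t => √(2 * μ * potential f θ t) :=
    ((continuous_potential hf θ).const_mul _).sqrt
  refine intervalIntegral.integral_comp_mul_deriv'' (f := u) (f' := u')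
    (g := fun t => √(2 * μ * potential f θ t)) ?_ ?_ ?_ hG.continuousOn
  · rw [uIcc_of_le hkl]
    exact h.continuousOn
  · rw [min_eq_left hkl, max_eq_right hkl]
    exact fun s hs => (h.hasDerivAt s hs).hasDerivWithinAt
  · rw [uIcc_of_le hkl]
    exact h.continuousOn_deriv

theorem abs_integral_sq_deriv_sub_le {μ δ : ℝ} (h : IsLayerSol k l θ ε f g m u u')
    (hf : Continuous f) (hkl : k ≤ l)
    (hδ : ∀ s ∈ Icc k l, |ε * u' s - √(2 * μ * potential f θ (u s))| ≤ δ) :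
    |ε * (∫ s in k..l, u' s ^ 2) - ∫ t in u k..u l, √(2 * μ * potential f θ t)| ≤
      δ * (u l - u k) := by
  have hu : IntervalIntegrable u' volume k l := h.continuousOn_deriv.intervalIntegrable_of_Icc hkl
  have hsq : IntervalIntegrable (fun s => u' s ^ 2) volume k l :=
    (h.continuousOn_deriv.pow 2).intervalIntegrable_of_Icc hkl
  have hroot : IntervalIntegrable (fun s => √(2 * μ * potential f θ (u s)) * u' s) volume k l :=
    ((h.continuousOn_comp ((continuous_potential hf θ).const_mul (2 * μ)).sqrt).mul
      h.continuousOn_deriv).intervalIntegrable_of_Icc hkl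
  calc |ε * (∫ s in k..l, u' s ^ 2) - ∫ t in u k..u l, √(2 * μ * potential f θ t)|
      = ‖∫ s in k..l, (ε * u' s - √(2 * μ * potential f θ (u s))) * u' s‖ := by
        rw [← h.integral_sqrt_potential_comp_mul_deriv hf hkl,
          ← intervalIntegral.integral_const_mul,
          ← intervalIntegral.integral_sub (hsq.const_mul ε) hroot, Real.norm_eq_abs]
        simp only [sub_mul, sq, mul_assoc]
    _ ≤ ∫ s in k..l, δ * u' s := by
        refine intervalIntegral.norm_integral_le_of_norm_le hkl
          (ae_of_all _ fun s hs => ?_) (hu.const_mul δ)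
        have hs := Ioc_subset_Icc_self hs
        rw [norm_mul, Real.norm_eq_abs, Real.norm_of_nonneg (h.deriv_nonneg s hs)]
        exact mul_le_mul_of_nonneg_right (hδ s hs) (h.deriv_nonneg s hs)
    _ = δ * (u l - u k) := by rw [intervalIntegral.integral_const_mul, h.integral_deriv hkl]

theorem hasDerivAt_layerEnergy (h : IsLayerSol k l θ ε f g m u u') (hf : Continuous f)
    (hε : ε ≠ 0) (μ : ℝ) (hs : s ∈ Ioo k l) :
    HasDerivAt (layerEnergy f θ μ ε u u')
      ((m s - μ) * f (u s) * u' s - g s * (ε * u' s) ^ 2) s := by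
  have hkinetic := (((h.hasDerivAt_deriv s hs).const_mul ε).pow 2).div_const 2
  have hpotential := ((hasDerivAt_potential hf θ (u s)).comp s (h.hasDerivAt s hs)).const_mul μ
  refine (hkinetic.sub hpotential).congr_deriv ?_
  field_simp
  ring

theorem continuousOn_layerEnergy (h : IsLayerSol k l θ ε f g m u u') (hf : Continuous f) (μ : ℝ) :
    ContinuousOn (layerEnergy f θ μ ε u u') (Icc k l) :=
  (((h.continuousOn_deriv.const_smul ε).pow 2).div_const 2).sub
    ((h.continuousOn_comp (continuous_potential hf θ)).const_smul μ)

theorem abs_layerEnergy_deriv_le (h : IsLayerSol k l θ ε f g m u u') (hf : IsRestoring f θ κ)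
    (hgm : IsLayerCoeff k l K c g m) (hε : 0 ≤ ε) (μ : ℝ) (hV : ∀ s ∈ Icc k l, ε * u' s ≤ V)
    (hs : s ∈ Icc k l) :
    |(m s - μ) * f (u s) * u' s - g s * (ε * u' s) ^ 2| ≤
      (K * V * ε + f (u l) * |m l - μ|) * u' s + f (u l) * K * ((l - s) * u' s) := by
  have hkl : k ≤ l := hs.1.trans hs.2
  have hl : l ∈ Icc k l := right_mem_Icc.2 hkl
  have hu := h.deriv_nonneg s hs
  have hfu := hf.nonneg (h.rest_le s hs)
  have hmono : f (u s) ≤ f (u l) :=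
    hf.monotoneOn (h.rest_le s hs) (h.rest_le l hl) (h.monotoneOn hs hl hs.2)
  have hstrength : |m s - μ| ≤ K * (l - s) + |m l - μ| :=
    (abs_sub_le _ (m l) _).trans (add_le_add_left (hgm.abs_strength_sub_le s hs) _)
  have hreaction : |(m s - μ) * f (u s) * u' s| ≤ (K * (l - s) + |m l - μ|) * f (u l) * u' s := by
    rw [abs_mul, abs_mul, abs_of_nonneg hfu, abs_of_nonneg hu]
    gcongr
    exact (abs_nonneg _).trans hstrength
  have hdamping : |g s * (ε * u' s) ^ 2| ≤ K * (V * (ε * u' s)) := by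
    rw [abs_mul, abs_of_nonneg (sq_nonneg (ε * u' s)), sq]
    gcongr
    exacts [hgm.bound_nonneg hkl, hgm.abs_damping_le s hs, hV s hs]
  calc |(m s - μ) * f (u s) * u' s - g s * (ε * u' s) ^ 2|
      ≤ (K * (l - s) + |m l - μ|) * f (u l) * u' s + K * (V * (ε * u' s)) :=
        (abs_sub _ _).trans (add_le_add hreaction hdamping)
    _ = _ := by ring

theorem abs_layerEnergy_sub_left_le (h : IsLayerSol k l θ ε f g m u u') (hf : IsRestoring f θ κ)
    (hgm : IsLayerCoeff k l K c g m) (hε : 0 < ε) (μ : ℝ) (hV : ∀ s ∈ Icc k l, ε * u' s ≤ V)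
    (hs : s ∈ Icc k l) :
    |layerEnergy f θ μ ε u u' s - layerEnergy f θ μ ε u u' k| ≤
      (K * V * ε + f (u l) * |m l - μ|) * (u l - u k) + f (u l) * K * ∫ x in k..l, (u x - θ) := by
  have hkl : k ≤ l := hs.1.trans hs.2
  have hlinear : ContinuousOn (fun x => (l - x) * u' x) (Icc k l) :=
    (by fun_prop : ContinuousOn (fun x => l - x) _).mul h.continuousOn_deriv
  set A := K * V * ε + f (u l) * |m l - μ|
  calc |layerEnergy f θ μ ε u u' s - layerEnergy f θ μ ε u u' k|
      ≤ ∫ x in k..l, (A * u' x + f (u l) * K * ((l - x) * u' x)) :=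
        abs_sub_left_le_integral_of_abs_deriv_le (h.continuousOn_layerEnergy hf.continuous μ)
          (fun x hx => h.hasDerivAt_layerEnergy hf.continuous hε.ne' μ hx)
          ((continuousOn_const.mul h.continuousOn_deriv).add (continuousOn_const.mul hlinear))
          (fun x hx => h.abs_layerEnergy_deriv_le hf hgm hε.le μ hV hx) hs
    _ = A * (u l - u k) + f (u l) * K * ∫ x in k..l, (l - x) * u' x := by
        rw [intervalIntegral.integral_add
            ((h.continuousOn_deriv.intervalIntegrable_of_Icc hkl).const_mul _)
            ((hlinear.intervalIntegrable_of_Icc hkl).const_mul _),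
          intervalIntegral.integral_const_mul, intervalIntegral.integral_const_mul,
          h.integral_deriv hkl]
    _ ≤ A * (u l - u k) + f (u l) * K * ∫ x in k..l, (u x - θ) := by
        gcongr
        exacts [mul_nonneg (hf.nonneg (h.rest_le l (right_mem_Icc.2 hkl)))
          (hgm.bound_nonneg hkl), h.integral_sub_mul_deriv_le hkl]

end IsLayerSol

end Layer

section LayerFamily

/-- A family, indexed by small `ε > 0`, of nondecreasing layer solutions on `[k, l]` with uniform
coefficient bounds, whose right boundary condition `ε u'(l) = e(u(l))` has a nonincreasing flux. -/
structure IsLayerFamily (k l θ κ K c : ℝ) (f e : ℝ → ℝ) (g m u u' : ℝ → ℝ → ℝ) : Prop where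
  lt : k < l
  isRestoring : IsRestoring f θ κ
  antitoneOn_flux : AntitoneOn e (Ici θ)
  eventually_isLayerCoeff : ∀ᶠ ε in 𝓝[>] 0, IsLayerCoeff k l K c (g ε) (m ε)
  eventually_isLayerSol : ∀ᶠ ε in 𝓝[>] 0, IsLayerSol k l θ ε f (g ε) (m ε) (u ε) (u' ε)
  eventually_flux_eq : ∀ᶠ ε in 𝓝[>] 0, ε * u' ε l = e (u ε l)

namespace IsLayerFamily

variable {k l θ κ K c μ p : ℝ} {f e : ℝ → ℝ} {g m u u' : ℝ → ℝ → ℝ}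

theorem eventually_rest_le_right (h : IsLayerFamily k l θ κ K c f e g m u u') :
    ∀ᶠ ε in 𝓝[>] 0, θ ≤ u ε l := by
  filter_upwards [h.eventually_isLayerSol] with ε hsol
  exact hsol.rest_le l (right_mem_Icc.2 h.lt.le)

theorem strength_pos_of_tendsto (h : IsLayerFamily k l θ κ K c f e g m u u')
    (hμ : Tendsto (fun ε => m ε l) (𝓝[>] 0) (𝓝 μ)) : 0 < μ := by
  obtain ⟨ε, hcoeff⟩ := h.eventually_isLayerCoeff.exists
  refine hcoeff.lower_pos.trans_le (ge_of_tendsto hμ ?_)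
  filter_upwards [h.eventually_isLayerCoeff] with ε hcoeff
  exact hcoeff.le_strength l (right_mem_Icc.2 h.lt.le)

theorem eventually_scaled_deriv_le (h : IsLayerFamily k l θ κ K c f e g m u u') :
    ∀ᶠ ε in 𝓝[>] 0, ∀ s ∈ Icc k l, ε * u' ε s ≤ Real.exp (K * (l - k)) * e θ := by
  filter_upwards [self_mem_nhdsWithin, h.eventually_isLayerCoeff, h.eventually_isLayerSol,
    h.eventually_flux_eq, h.eventually_rest_le_right] with ε hε hcoeff hsol hflux hrest s hs
  refine (hsol.scaled_deriv_le h.isRestoring hcoeff (le_of_lt hε) hs).trans ?_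
  rw [hflux]
  exact mul_le_mul_of_nonneg_left (h.antitoneOn_flux self_mem_Ici hrest hrest) (Real.exp_pos _).le

theorem exists_eventually_integral_sub_le (h : IsLayerFamily k l θ κ K c f e g m u u') :
    ∃ A, ∀ᶠ ε in 𝓝[>] 0, ∫ s in k..l, (u ε s - θ) ≤ A * ε := by
  refine ⟨Real.exp (K * (l - k)) * e θ * (1 + K * (l - k)) / (c * κ), ?_⟩
  filter_upwards [self_mem_nhdsWithin, h.eventually_isLayerCoeff, h.eventually_isLayerSol,
    h.eventually_scaled_deriv_le] with ε hε hcoeff hsol hV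
  rw [div_mul_eq_mul_div, le_div_iff₀' (mul_pos hcoeff.lower_pos h.isRestoring.rate_pos)]
  exact hsol.integral_sub_le h.isRestoring hcoeff h.lt.le hε hV

theorem tendsto_integral_sub (h : IsLayerFamily k l θ κ K c f e g m u u') :
    Tendsto (fun ε => ∫ s in k..l, (u ε s - θ)) (𝓝[>] 0) (𝓝 0) := by
  obtain ⟨A, hA⟩ := h.exists_eventually_integral_sub_le
  have hlim : Tendsto (fun ε => A * ε) (𝓝[>] 0) (𝓝 0) :=
    tendsto_nhdsWithin_of_tendsto_nhds (Continuous.tendsto' (by fun_prop) _ _ (mul_zero A))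
  refine squeeze_zero' ?_ hA hlim
  filter_upwards [h.eventually_isLayerSol] with ε hsol
  exact intervalIntegral.integral_nonneg h.lt.le fun s hs => sub_nonneg.2 (hsol.rest_le s hs)

theorem exists_eventually_right_le (h : IsLayerFamily k l θ κ K c f e g m u u') :
    ∃ B, ∀ᶠ ε in 𝓝[>] 0, u ε l ≤ B := by
  obtain ⟨A, hA⟩ := h.exists_eventually_integral_sub_le
  refine ⟨θ + A + Real.exp (K * (l - k)) * e θ, ?_⟩
  filter_upwards [Ioc_mem_nhdsGT (sub_pos.2 h.lt), h.eventually_isLayerSol,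
    h.eventually_scaled_deriv_le, hA] with ε hε hsol hV hA
  exact hsol.right_le_of_integral_sub_le hε.1 hε.2 hV hA

theorem tendsto_left (h : IsLayerFamily k l θ κ K c f e g m u u') :
    Tendsto (fun ε => u ε k) (𝓝[>] 0) (𝓝 θ) := by
  have hkl := sub_pos.2 h.lt
  have hk : k ∈ Icc k l := left_mem_Icc.2 h.lt.le
  refine tendsto_sub_nhds_zero_iff.1 (squeeze_zero' ?_ ?_
    (by simpa only [zero_div] using h.tendsto_integral_sub.div_const (l - k)))
  · filter_upwards [h.eventually_isLayerSol] with ε hsol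
    exact sub_nonneg.2 (hsol.rest_le k hk)
  · filter_upwards [h.eventually_isLayerSol] with ε hsol
    rw [le_div_iff₀' hkl]
    exact sub_mul_le_integral_of_monotoneOn
      (fun x hx y hy hxy => sub_le_sub_right (hsol.monotoneOn hx hy hxy) θ)
      (fun x hx => sub_nonneg.2 (hsol.rest_le x hx)) hk

theorem tendsto_scaled_deriv_left (h : IsLayerFamily k l θ κ K c f e g m u u') :
    Tendsto (fun ε => ε * u' ε k) (𝓝[>] 0) (𝓝 0) := by
  obtain ⟨B, hB⟩ := h.exists_eventually_right_le
  have hkl := sub_pos.2 h.lt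
  have hk : k ∈ Icc k l := left_mem_Icc.2 h.lt.le
  have hlim : Tendsto (fun ε => ε * (Real.exp (K * (l - k)) * (B - θ) / (l - k)))
      (𝓝[>] 0) (𝓝 0) :=
    tendsto_nhdsWithin_of_tendsto_nhds (Continuous.tendsto' (by fun_prop) _ _ (zero_mul _))
  refine squeeze_zero' ?_ ?_ hlim
  · filter_upwards [self_mem_nhdsWithin, h.eventually_isLayerSol] with ε hε hsol
    exact mul_nonneg (le_of_lt hε) (hsol.deriv_nonneg k hk)
  · filter_upwards [self_mem_nhdsWithin, h.eventually_isLayerCoeff, h.eventually_isLayerSol, hB]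
      with ε hε hcoeff hsol hB
    refine mul_le_mul_of_nonneg_left ?_ (le_of_lt hε)
    rw [le_div_iff₀' hkl]
    refine (hsol.mul_deriv_left_le h.isRestoring hcoeff h.lt).trans ?_
    have := hsol.rest_le k hk
    gcongr

theorem tendsto_layerEnergy_left (h : IsLayerFamily k l θ κ K c f e g m u u') (μ : ℝ) :
    Tendsto (fun ε => layerEnergy f θ μ ε (u ε) (u' ε) k) (𝓝[>] 0) (𝓝 0) := by
  have hkinetic := (h.tendsto_scaled_deriv_left.pow 2).div_const 2
  have hpotential := (((continuous_potential h.isRestoring.continuous θ).tendsto θ).comp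
    h.tendsto_left).const_mul μ
  simpa [layerEnergy, potential_self] using hkinetic.sub hpotential

theorem tendstoUniformlyOn_layerEnergy (h : IsLayerFamily k l θ κ K c f e g m u u')
    (hμ : Tendsto (fun ε => m ε l) (𝓝[>] 0) (𝓝 μ)) :
    TendstoUniformlyOn (fun ε => layerEnergy f θ μ ε (u ε) (u' ε)) 0 (𝓝[>] 0) (Icc k l) := by
  obtain ⟨B, hB⟩ := h.exists_eventually_right_le
  set V := Real.exp (K * (l - k)) * e θ
  have hbound : Tendsto (fun ε => |layerEnergy f θ μ ε (u ε) (u' ε) k| +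
      ((K * V * ε + f B * |m ε l - μ|) * (B - θ) + f B * K * ∫ s in k..l, (u ε s - θ)))
      (𝓝[>] 0) (𝓝 0) := by
    have hid : Tendsto (fun ε : ℝ => ε) (𝓝[>] 0) (𝓝 0) := tendsto_id.mono_left nhdsWithin_le_nhds
    simpa using (h.tendsto_layerEnergy_left μ).abs.add
      ((((hid.const_mul (K * V)).add ((hμ.sub_const μ).abs.const_mul (f B))).mul_const (B - θ)).add
        (h.tendsto_integral_sub.const_mul (f B * K)))
  refine Metric.tendstoUniformlyOn_iff.2 fun δ hδ => ?_
  filter_upwards [self_mem_nhdsWithin, h.eventually_isLayerCoeff, h.eventually_isLayerSol,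
    h.eventually_scaled_deriv_le, h.eventually_rest_le_right, hB, hbound.eventually_lt_const hδ]
    with ε hε hcoeff hsol hV hrest hB hlt s hs
  have hK := hcoeff.bound_nonneg h.lt.le
  have hV0 : 0 ≤ V := (mul_nonneg (le_of_lt hε) (hsol.deriv_nonneg s hs)).trans (hV s hs)
  have hfB : f (u ε l) ≤ f B := h.isRestoring.monotoneOn hrest (hrest.trans hB) hB
  have hk := left_mem_Icc.2 h.lt.le
  have hrestk := hsol.rest_le k hk
  have hfB0 : 0 ≤ f B := h.isRestoring.nonneg (hrest.trans hB)
  have hint : 0 ≤ ∫ s in k..l, (u ε s - θ) :=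
    intervalIntegral.integral_nonneg h.lt.le fun s hs => sub_nonneg.2 (hsol.rest_le s hs)
  rw [Pi.zero_apply, dist_zero_left, Real.norm_eq_abs]
  refine (sub_le_iff_le_add'.1 ((abs_sub_abs_le_abs_sub _ _).trans
    (hsol.abs_layerEnergy_sub_left_le h.isRestoring hcoeff hε μ hV hs))).trans_lt (hlt.trans_le' ?_)
  have := hsol.monotoneOn hk (right_mem_Icc.2 h.lt.le) h.lt.le
  have : 0 ≤ ε := le_of_lt hε
  gcongr

theorem tendstoUniformlyOn_scaled_deriv (h : IsLayerFamily k l θ κ K c f e g m u u')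
    (hμ : Tendsto (fun ε => m ε l) (𝓝[>] 0) (𝓝 μ)) :
    TendstoUniformlyOn (fun ε s => ε * u' ε s - √(2 * μ * potential f θ (u ε s))) 0
      (𝓝[>] 0) (Icc k l) := by
  refine Metric.tendstoUniformlyOn_iff.2 fun δ hδ => ?_
  filter_upwards [self_mem_nhdsWithin, h.eventually_isLayerSol,
    Metric.tendstoUniformlyOn_iff.1 (h.tendstoUniformlyOn_layerEnergy hμ) ((δ / 2) ^ 2 / 2)
      (by positivity)] with ε hε hsol henergy s hs
  have hG : 0 ≤ 2 * μ * potential f θ (u ε s) :=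
    mul_nonneg (mul_nonneg zero_le_two (h.strength_pos_of_tendsto hμ).le)
      (h.isRestoring.potential_nonneg (hsol.rest_le s hs))
  have hsq : |(ε * u' ε s) ^ 2 - √(2 * μ * potential f θ (u ε s)) ^ 2| ≤ (δ / 2) ^ 2 := by
    have hE := henergy s hs
    rw [Pi.zero_apply, dist_zero_left, Real.norm_eq_abs, abs_lt, layerEnergy] at hE
    rw [Real.sq_sqrt hG, abs_le]
    constructor <;> linarith [hE.1, hE.2]
  rw [Pi.zero_apply, dist_zero_left, Real.norm_eq_abs]
  calc |ε * u' ε s - √(2 * μ * potential f θ (u ε s))| ≤ √((δ / 2) ^ 2) :=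
        abs_sub_le_sqrt_of_abs_sq_sub_sq_le
          (mul_nonneg (le_of_lt hε) (hsol.deriv_nonneg s hs)) (Real.sqrt_nonneg _) hsq
    _ = δ / 2 := Real.sqrt_sq (by positivity)
    _ < δ := half_lt_self hδ

theorem tendsto_right (h : IsLayerFamily k l θ κ K c f e g m u u')
    (hμ : Tendsto (fun ε => m ε l) (𝓝[>] 0) (𝓝 μ)) (hp : θ ≤ p)
    (hpe : e p = √(2 * μ * potential f θ p)) : Tendsto (fun ε => u ε l) (𝓝[>] 0) (𝓝 p) := by
  have hanti : StrictAntiOn (fun t => e t - √(2 * μ * potential f θ t)) (Ici θ) :=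
    fun x hx y hy hxy => by
      have hμ0 := h.strength_pos_of_tendsto hμ
      refine (sub_lt_sub_left (Real.sqrt_lt_sqrt ?_ ?_) (e y)).trans_le
        (sub_le_sub_right (h.antitoneOn_flux hx hy hxy.le) _)
      · have := h.isRestoring.potential_nonneg hx
        positivity
      · have := h.isRestoring.strictMonoOn_potential hx hy hxy
        gcongr
  refine tendsto_of_tendsto_comp_of_strictAntiOn hanti hp h.eventually_rest_le_right ?_
  have hlim := (h.tendstoUniformlyOn_scaled_deriv hμ).tendsto_at (right_mem_Icc.2 h.lt.le)
  rw [hpe, sub_self]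
  refine hlim.congr' ?_
  filter_upwards [h.eventually_flux_eq] with ε hflux
  rw [hflux]

theorem tendsto_integral_sq_deriv (h : IsLayerFamily k l θ κ K c f e g m u u')
    (hμ : Tendsto (fun ε => m ε l) (𝓝[>] 0) (𝓝 μ)) (hp : θ ≤ p)
    (hpe : e p = √(2 * μ * potential f θ p)) :
    Tendsto (fun ε => ε * ∫ s in k..l, u' ε s ^ 2) (𝓝[>] 0)
      (𝓝 (∫ t in θ..p, √(2 * μ * potential f θ t))) := by
  have hroot : Continuous fun t => √(2 * μ * potential f θ t) :=
    ((continuous_potential h.isRestoring.continuous θ).const_mul (2 * μ)).sqrt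
  have hlayer :=
    tendsto_intervalIntegral_of_tendsto hroot h.tendsto_left (h.tendsto_right hμ hp hpe)
  suffices herror : Tendsto (fun ε => ε * (∫ s in k..l, u' ε s ^ 2) -
      ∫ t in u ε k..u ε l, √(2 * μ * potential f θ t)) (𝓝[>] 0) (𝓝 0) by
    simpa only [sub_add_cancel, zero_add] using herror.add hlayer
  obtain ⟨B, hB⟩ := h.exists_eventually_right_le
  refine Metric.tendsto_nhds.2 fun δ hδ => ?_
  have hB0 : 0 ≤ B - θ := by
    obtain ⟨ε, hB, hrest⟩ := (hB.and h.eventually_rest_le_right).exists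
    exact sub_nonneg.2 (hrest.trans hB)
  filter_upwards [h.eventually_isLayerSol, hB, Metric.tendstoUniformlyOn_iff.1
    (h.tendstoUniformlyOn_scaled_deriv hμ) (δ / (B - θ + 1)) (by positivity)] with ε hsol hB hclose
  simp only [Pi.zero_apply, dist_zero_left, Real.norm_eq_abs] at hclose
  rw [dist_zero_right, Real.norm_eq_abs]
  calc _ ≤ δ / (B - θ + 1) * (u ε l - u ε k) :=
        hsol.abs_integral_sq_deriv_sub_le h.isRestoring.continuous h.lt.le
          fun s hs => (hclose s hs).le
    _ ≤ δ / (B - θ + 1) * (B - θ) := by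
        have := hsol.rest_le k (left_mem_Icc.2 h.lt.le)
        gcongr
    _ < δ / (B - θ + 1) * (B - θ + 1) := by
        gcongr
        linarith
    _ = δ := by field_simp

theorem tendsto_integral_damping_sub (h : IsLayerFamily k l θ κ K c f e g m u u') :
    Tendsto (fun ε => ε * (∫ s in k..l, g ε s * u' ε s ^ 2) -
      g ε l * (ε * ∫ s in k..l, u' ε s ^ 2)) (𝓝[>] 0) (𝓝 0) := by
  refine squeeze_zero_norm' ?_ (by simpa only [mul_zero] using
    h.tendsto_integral_sub.const_mul (K * (Real.exp (K * (l - k)) * e θ)))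
  filter_upwards [self_mem_nhdsWithin, h.eventually_isLayerCoeff, h.eventually_isLayerSol,
    h.eventually_scaled_deriv_le] with ε hε hcoeff hsol hV
  exact hsol.abs_integral_damping_sub_le hcoeff h.lt.le (le_of_lt hε) hV

end IsLayerFamily

end LayerFamily

section Rescaling

/-- On `[k, l]`, `α` and `β` take values in `[c, M]` with `c > 0`, and their derivatives `α'`,
`α''`, `β'` are bounded by `C`; this describes `a(·/ε)`, `b(·/ε)` uniformly in `ε`. -/
structure IsSlowlyVarying (k l c M C : ℝ) (α α' α'' β β' : ℝ → ℝ) : Prop where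
  lower_pos : 0 < c
  hasDerivAt_fst : ∀ s ∈ Icc k l, HasDerivAt α (α' s) s
  hasDerivAt_deriv_fst : ∀ s ∈ Icc k l, HasDerivAt α' (α'' s) s
  hasDerivAt_snd : ∀ s ∈ Icc k l, HasDerivAt β (β' s) s
  fst_mem_Icc : ∀ s ∈ Icc k l, α s ∈ Icc c M
  snd_mem_Icc : ∀ s ∈ Icc k l, β s ∈ Icc c M
  abs_deriv_fst_le : ∀ s ∈ Icc k l, |α' s| ≤ C
  abs_deriv_deriv_fst_le : ∀ s ∈ Icc k l, |α'' s| ≤ C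
  abs_deriv_snd_le : ∀ s ∈ Icc k l, |β' s| ≤ C

namespace IsSlowlyVarying

variable {k l c M C s : ℝ} {α α' α'' β β' : ℝ → ℝ}

theorem abs_damping_le (h : IsSlowlyVarying k l c M C α α' α'' β β') (hk : 0 < k) (ν : ℝ)
    (hs : s ∈ Icc k l) : |ν / s + α' s / α s| ≤ |ν| / k + C / c := by
  refine (abs_add_le _ _).trans (add_le_add ?_ ?_)
  · rw [abs_div, abs_of_pos (hk.trans_le hs.1)]
    exact div_le_div_of_nonneg_left (abs_nonneg ν) hk hs.1
  · have hα := (h.fst_mem_Icc s hs).1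
    have hα' := h.abs_deriv_fst_le s hs
    rw [abs_div, abs_of_pos (h.lower_pos.trans_le hα)]
    exact div_le_div₀ ((abs_nonneg _).trans hα') hα' h.lower_pos hα

theorem abs_damping_sub_le (h : IsSlowlyVarying k l c M C α α' α'' β β') (hk : 0 < k) (ν : ℝ)
    (hs : s ∈ Icc k l) : |ν / s + α' s / α s - (ν / l + α' l / α l)| ≤
      ((1 / k + |ν| / k ^ 2) + (1 / c + C / c ^ 2) * C) * (l - s) := by
  have hl : l ∈ Icc k l := right_mem_Icc.2 (hs.1.trans hs.2)
  have hgeometric : |ν / s - ν / l| ≤ (1 / k + |ν| / k ^ 2) * (l - s) :=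
    abs_div_sub_div_le hk hs.1 hl.1 le_rfl (by simpa using hs.2)
      (by rw [abs_sub_comm, abs_of_nonneg (sub_nonneg.2 hs.2)])
  have hlogarithmic : |α' s / α s - α' l / α l| ≤ (1 / c + C / c ^ 2) * (C * (l - s)) :=
    abs_div_sub_div_le h.lower_pos (h.fst_mem_Icc s hs).1 (h.fst_mem_Icc l hl).1
      (h.abs_deriv_fst_le l hl)
      (abs_sub_right_le_of_abs_deriv_le h.hasDerivAt_deriv_fst h.abs_deriv_deriv_fst_le hs)
      (abs_sub_right_le_of_abs_deriv_le h.hasDerivAt_fst h.abs_deriv_fst_le hs)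
  rw [add_sub_add_comm, add_mul, mul_assoc _ C]
  exact (abs_add_le _ _).trans (add_le_add hgeometric hlogarithmic)

theorem abs_strength_sub_le (h : IsSlowlyVarying k l c M C α α' α'' β β') (hs : s ∈ Icc k l) :
    |β s / α s - β l / α l| ≤ (1 / c + M / c ^ 2) * C * (l - s) := by
  have hl : l ∈ Icc k l := right_mem_Icc.2 (hs.1.trans hs.2)
  have hβ := h.snd_mem_Icc l hl
  rw [mul_assoc]
  exact abs_div_sub_div_le h.lower_pos (h.fst_mem_Icc s hs).1 (h.fst_mem_Icc l hl).1
    ((abs_of_pos (h.lower_pos.trans_le hβ.1)).trans_le hβ.2)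
    (abs_sub_right_le_of_abs_deriv_le h.hasDerivAt_snd h.abs_deriv_snd_le hs)
    (abs_sub_right_le_of_abs_deriv_le h.hasDerivAt_fst h.abs_deriv_fst_le hs)

end IsSlowlyVarying

theorem exists_isLayerCoeff_of_isSlowlyVarying {k l : ℝ} (hk : 0 < k) (hkl : k ≤ l)
    (ν c M C : ℝ) :
    ∃ K, ∀ α α' α'' β β', IsSlowlyVarying k l c M C α α' α'' β β' →
      IsLayerCoeff k l K (c / M) (fun s => ν / s + α' s / α s) (fun s => β s / α s) := by
  set K₁ := |ν| / k + C / c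
  set K₂ := (1 / k + |ν| / k ^ 2) + (1 / c + C / c ^ 2) * C
  set K₃ := (1 / c + M / c ^ 2) * C
  refine ⟨max K₁ (max K₂ K₃), fun α α' α'' β β' h => ?_⟩
  have hα : ∀ s ∈ Icc k l, 0 < α s := fun s hs => h.lower_pos.trans_le (h.fst_mem_Icc s hs).1
  have hαcont : ContinuousOn α (Icc k l) := HasDerivAt.continuousOn h.hasDerivAt_fst
  have hl : l ∈ Icc k l := right_mem_Icc.2 hkl
  exact
    { lower_pos := div_pos h.lower_pos ((hα l hl).trans_le (h.fst_mem_Icc l hl).2)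
      continuousOn_damping :=
        (continuousOn_const.div continuousOn_id fun s hs => (hk.trans_le hs.1).ne').add
          ((HasDerivAt.continuousOn h.hasDerivAt_deriv_fst).div hαcont fun s hs => (hα s hs).ne')
      continuousOn_strength :=
        (HasDerivAt.continuousOn h.hasDerivAt_snd).div hαcont fun s hs => (hα s hs).ne'
      abs_damping_le := fun s hs => (h.abs_damping_le hk ν hs).trans (le_max_left _ _)
      le_strength := fun s hs => div_le_div₀ (h.lower_pos.le.trans (h.snd_mem_Icc s hs).1)
        (h.snd_mem_Icc s hs).1 (hα s hs) (h.fst_mem_Icc s hs).2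
      abs_damping_sub_le := fun s hs => (h.abs_damping_sub_le hk ν hs).trans
        (mul_le_mul_of_nonneg_right (le_max_of_le_right (le_max_left _ _)) (sub_nonneg.2 hs.2))
      abs_strength_sub_le := fun s hs => (h.abs_strength_sub_le hs).trans
        (mul_le_mul_of_nonneg_right (le_max_of_le_right (le_max_right _ _)) (sub_nonneg.2 hs.2)) }

theorem A1.exists_isRestoring {τ θ₀ : ℝ} {f : ℝ → ℝ} (hf : A1 τ θ₀ f) :
    ∃ κ, IsRestoring f θ₀ κ := by
  obtain ⟨hdiff, -, ⟨κ, hκ, hκf⟩, hzero⟩ := hf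
  have hderiv (t : ℝ) : HasDerivAt (fun t => f t - κ * t) (deriv f t - κ) t :=
    ((hdiff.differentiable one_ne_zero t).hasDerivAt.sub
      ((hasDerivAt_id t).const_mul κ)).congr_deriv (by rw [mul_one])
  refine ⟨κ, hdiff.continuous, hzero, hκ, Monotone.monotoneOn ?_ _⟩
  exact monotone_of_hasDerivAt_nonneg hderiv fun t => sub_nonneg.2 (hκf t)

theorem A3.exists_eventually_abs_deriv_le {N : ℕ} {τ kstar : ℝ} {a b : ℝ → ℝ}
    (hab : A3 N τ kstar a b) :
    ∃ C, ∀ᶠ ε in 𝓝[>] 0, ∀ s ∈ Icc kstar 1, |deriv a (s / ε) / ε| ≤ C ∧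
      |deriv b (s / ε) / ε| ≤ C ∧ |deriv (deriv a) (s / ε) / ε / ε| ≤ C := by
  obtain ⟨ha, hb, -, -, -, -, -, hk, L, -, hL⟩ := hab
  have : Continuous (deriv a) := ha.continuous_deriv one_le_two
  have : Continuous (deriv (deriv a)) := (ContDiff.deriv' (n := 1) ha).continuous_deriv le_rfl
  have : Continuous (deriv b) := hb.continuous_deriv le_rfl
  refine ⟨L + 1, ?_⟩
  filter_upwards [self_mem_nhdsWithin, tendsto_inv_nhdsGT_zero.eventually
    (eventually_forall_Icc_le_of_tendsto_sSup (fun R => by fun_prop) hk.2 (lt_add_one L) hL)]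
    with ε hε hbound s hs
  have hR : 0 < ε⁻¹ := inv_pos.2 hε
  have hle := hbound (s / ε) ⟨mul_le_mul_of_nonneg_right hs.1 hR.le,
    mul_le_of_le_one_left hR.le hs.2⟩
  have h1 : 0 ≤ |deriv a (s / ε)| * ε⁻¹ := by positivity
  have h2 : 0 ≤ |deriv b (s / ε)| * ε⁻¹ := by positivity
  have h3 : 0 ≤ |deriv (deriv a) (s / ε)| * ε⁻¹ * ε⁻¹ := by positivity
  simp only [div_eq_mul_inv, abs_mul, abs_of_pos hR] at h1 h2 h3 hle ⊢
  refine ⟨?_, ?_, ?_⟩ <;> linarith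

theorem A3.exists_eventually_isSlowlyVarying {N : ℕ} {τ kstar : ℝ} {a b : ℝ → ℝ}
    (hab : A3 N τ kstar a b) :
    ∃ c M C, ∀ᶠ ε in 𝓝[>] 0, IsSlowlyVarying kstar 1 c M C
      (fun s => a (s / ε)) (deriv fun t => a (t / ε)) (fun s => deriv (deriv a) (s / ε) / ε / ε)
      (fun s => b (s / ε)) (fun s => deriv b (s / ε) / ε) := by
  obtain ⟨C, hC⟩ := hab.exists_eventually_abs_deriv_le
  obtain ⟨ha, hb, -, -, ⟨M, hM⟩, ⟨c, hc, hlower⟩, -, hk, -⟩ := hab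
  have hda (r : ℝ) := (ha.differentiable two_ne_zero r).hasDerivAt
  have hdda (r : ℝ) := ((ContDiff.deriv' (n := 1) ha).differentiable one_ne_zero r).hasDerivAt
  have hdb (r : ℝ) := (hb.differentiable one_ne_zero r).hasDerivAt
  refine ⟨c, M, C, ?_⟩
  filter_upwards [self_mem_nhdsWithin, hC] with ε hε hC
  have hnonneg : ∀ s ∈ Icc kstar 1, 0 ≤ s / ε := fun s hs =>
    div_nonneg (hk.1.le.trans hs.1) (le_of_lt hε)
  have hderiv : (deriv fun t => a (t / ε)) = fun s => deriv a (s / ε) / ε :=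
    funext fun s => (hasDerivAt_comp_div_s18 (hda _)).deriv
  rw [hderiv]
  exact
    { lower_pos := hc
      hasDerivAt_fst := fun s _ => hasDerivAt_comp_div_s18 (hda _)
      hasDerivAt_deriv_fst := fun s _ => (hasDerivAt_comp_div_s18 (hdda _)).div_const ε
      hasDerivAt_snd := fun s _ => hasDerivAt_comp_div_s18 (hdb _)
      fst_mem_Icc := fun s hs => ⟨(hlower _ (hnonneg s hs)).1, (hM _ (hnonneg s hs)).1⟩
      snd_mem_Icc := fun s hs => ⟨(hlower _ (hnonneg s hs)).2, (hM _ (hnonneg s hs)).2⟩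
      abs_deriv_fst_le := fun s hs => (hC s hs).1
      abs_deriv_deriv_fst_le := fun s hs => (hC s hs).2.2
      abs_deriv_snd_le := fun s hs => (hC s hs).2.1 }

theorem IsSolE.isLayerSol {N : ℕ} {f e a b : ℝ → ℝ} {θ₀ ε k : ℝ} {u u' : ℝ → ℝ}
    (hu : IsSolE N f e a b θ₀ ε u u') (hε : ε ≠ 0) (hk : 0 < k) :
    IsLayerSol k 1 θ₀ ε f
      (fun s => ((N : ℝ) - 1) / s + deriv (fun t => a (t / ε)) s / a (s / ε))
      (fun s => b (s / ε) / a (s / ε)) u u' := by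
  obtain ⟨hcont, hderiv, hcont', -, heq, -, -, hnonneg⟩ := hu
  have hIcc : Icc k 1 ⊆ Icc 0 1 := Icc_subset_Icc_left hk.le
  have hIoo : Ioo k 1 ⊆ Ioo 0 1 := Ioo_subset_Ioo_left hk.le
  refine ⟨hcont.mono hIcc, hcont'.mono fun s hs => ⟨hk.trans_le hs.1, hs.2⟩, fun s hs => ?_,
    fun s hs => ?_, fun s hs => (hnonneg s (hIcc hs)).2, fun s hs => (hnonneg s (hIcc hs)).1⟩
  · exact (hderiv s (Ioo_subset_Ioc_self (hIoo hs))).hasDerivAt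
      (Icc_mem_nhds (hIoo hs).1 (hIoo hs).2)
  · obtain ⟨d, hd, hode⟩ := heq s (hIoo hs)
    rwa [← hode, mul_div_cancel_left₀ _ (pow_ne_zero 2 hε), add_sub_cancel_right]

theorem exists_isLayerFamily {N : ℕ} {τ θ₀ kstar : ℝ} {f e a b : ℝ → ℝ} (hf : A1 τ θ₀ f)
    (he : A2 τ e) (hab : A3 N τ kstar a b) {u u' : ℝ → ℝ → ℝ}
    (hu : ∀ ε > 0, IsSolE N f e a b θ₀ ε (u ε) (u' ε)) :
    ∃ κ K c, IsLayerFamily kstar 1 θ₀ κ K c f e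
      (fun ε s => ((N : ℝ) - 1) / s + deriv (fun t => a (t / ε)) s / a (s / ε))
      (fun ε s => b (s / ε) / a (s / ε)) u u' := by
  obtain ⟨κ, hκ⟩ := hf.exists_isRestoring
  obtain ⟨c, M, C, hslow⟩ := hab.exists_eventually_isSlowlyVarying
  obtain ⟨-, -, -, -, -, -, -, hk, -⟩ := hab
  obtain ⟨K, hK⟩ := exists_isLayerCoeff_of_isSlowlyVarying hk.1 hk.2.le ((N : ℝ) - 1) c M C
  refine ⟨κ, K, c / M, hk.2, hκ, he.2.2.1.antitoneOn _,
    hslow.mono fun ε hε => hK _ _ _ _ _ hε, ?_, ?_⟩ <;>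
    filter_upwards [self_mem_nhdsWithin] with ε hε
  · exact (hu ε hε).isLayerSol (ne_of_gt hε) hk.1
  · obtain ⟨-, -, -, -, -, -, hflux, -⟩ := hu ε hε
    exact hflux

end Rescaling

theorem stmt_18_general {k l θ κ K c μ p : ℝ} {f e : ℝ → ℝ} {g m u u' : ℝ → ℝ → ℝ}
    (h : IsLayerFamily k l θ κ K c f e g m u u')
    (hμ : Tendsto (fun ε => m ε l) (𝓝[>] 0) (𝓝 μ)) (hp : θ ≤ p)
    (hpe : e p = √(2 * μ * potential f θ p)) :
    Tendsto (fun ε => ε * (∫ s in k..l, g ε s * u' ε s ^ 2) -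
      √μ * g ε l * ∫ t in θ..p, √(2 * potential f θ t)) (𝓝[>] 0) (𝓝 0) := by
  have hscale : ∫ t in θ..p, √(2 * μ * potential f θ t) =
      √μ * ∫ t in θ..p, √(2 * potential f θ t) := by
    simp_rw [mul_comm (2 : ℝ) μ, mul_assoc, Real.sqrt_mul (h.strength_pos_of_tendsto hμ).le,
      intervalIntegral.integral_const_mul]
  have haction := tendsto_sub_nhds_zero_iff.2 (h.tendsto_integral_sq_deriv hμ hp hpe)
  have hdamping : ∀ᶠ ε in 𝓝[>] 0, |g ε l| ≤ K := by
    filter_upwards [h.eventually_isLayerCoeff] with ε hcoeff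
    exact hcoeff.abs_damping_le l (right_mem_Icc.2 h.lt.le)
  have hlim := h.tendsto_integral_damping_sub.add (bdd_le_mul_tendsto_zero' K hdamping haction)
  rw [add_zero, hscale] at hlim
  exact hlim.congr fun ε => by ring

/-- precise leading term of `ε ∫_{k*}^1 ((N−1)/s + α_ε'/α_ε)(u_ε')² ds`. -/
theorem stmt_18 (N : ℕ) (hN : 2 ≤ N) (τ θ₀ kstar μ₀ p₀ : ℝ) (hτ : τ ∈ Set.Ioo (0:ℝ) 1)
    (f e a b : ℝ → ℝ) (hf : A1 τ θ₀ f) (he : A2 τ e) (hab : A3 N τ kstar a b)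
    (hμ : 0 < μ₀)
    (hβα : Tendsto (fun ε : ℝ => b (1 / ε) / a (1 / ε))
      (nhdsWithin (0:ℝ) (Set.Ioi 0)) (nhds μ₀))
    (hp : θ₀ < p₀) (hpe : e p₀ = Real.sqrt (2 * μ₀ * (Fo f p₀ - Fo f θ₀)))
    (u u' : ℝ → ℝ → ℝ)
    (hu : ∀ ε > 0, IsSolE N f e a b θ₀ ε (u ε) (u' ε)) :
    Tendsto (fun ε : ℝ =>
      ε * (∫ s in kstar..(1:ℝ),
        (((N:ℝ) - 1) / s + deriv (fun t : ℝ => a (t / ε)) s / a (s / ε)) * (u' ε s) ^ 2)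
      - Real.sqrt μ₀ * (((N:ℝ) - 1) + deriv (fun t : ℝ => a (t / ε)) 1 / a (1 / ε)) *
        ∫ t in θ₀..p₀, Real.sqrt (2 * (Fo f t - Fo f θ₀)))
      (nhdsWithin (0:ℝ) (Set.Ioi 0)) (nhds 0) := by
  obtain ⟨κ, K, c, h⟩ := exists_isLayerFamily hf he hab hu
  simpa only [div_one, potential] using stmt_18_general h hβα hp.le hpe
end
end
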